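/- Let n and m be multiplicatively independent integers, each at least 2, and let μ be a Borel probability measure on 𝕋 that is invariant and ergodic under the multiplicative semigroup of maps generated by ×n and ×m. If the measure-theoretic entropy h_μ(×n) is positive, then μ is Lebesgue measure on 𝕋. -/

import Mathlib

open MeasureTheory ENNReal

section Entropy

variable {α : Type*} [MeasurableSpace α]

/-- `P : Fin m → Set α` is a finite measurable partition of `α` modulo `μ`-null sets. -/
def IsFinMeasPartition (μ : Measure α) {m : ℕ} (P : Fin m → Set α) : Prop :=
  (∀ i, MeasurableSet (P i)) ∧ Pairwise (Function.onFun Disjoint P) ∧ μ (⋃ i, P i)ᶜ = 0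

/-- Shannon entropy (information) of a finite family of sets with respect to `μ`. -/
noncomputable def finPartitionEntropy (μ : Measure α) {ι : Type*} [Fintype ι]
    (P : ι → Set α) : ℝ≥0∞ :=
  ENNReal.ofReal (∑ i, Real.negMulLog ((μ (P i)).toReal))

/-- The common refinement `P ∨ T⁻¹ P ∨ ⋯ ∨ T^{-(n-1)} P`, indexed by `Fin n → Fin m`. -/
def refinedPartition (T : α → α) {m : ℕ} (P : Fin m → Set α) (n : ℕ) :
    (Fin n → Fin m) → Set α :=
  fun f => ⋂ i : Fin n, T^[(i : ℕ)] ⁻¹' P (f i)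

/-- The measure-theoretic (Kolmogorov–Sinai) entropy `h_μ(T)` of a transformation `T`
preserving `μ`, defined as the supremum over all finite measurable partitions `P` of
`inf_n H_μ(P ∨ T⁻¹P ∨ ⋯ ∨ T^{-n}P)/(n+1)` (by subadditivity this infimum equals the
usual limit). -/
noncomputable def ksEntropy (T : α → α) (μ : Measure α) : ℝ≥0∞ :=
  ⨆ (m : ℕ) (P : Fin m → Set α) (_ : IsFinMeasPartition μ P),
    ⨅ n : ℕ, finPartitionEntropy μ (refinedPartition T P (n + 1)) / (n + 1 : ℝ≥0∞)

end Entropy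


namespace RJ

/-- Multiplication by `q` on the circle. -/
abbrev mT (q : ℕ) : UnitAddCircle → UnitAddCircle := fun x => q • x

lemma measurable_mT (q : ℕ) : Measurable (mT q) := (continuous_nsmul q).measurable

/-- The point `1/q`. -/
noncomputable def tr (q : ℕ) : UnitAddCircle := ((1 / (q : ℝ) : ℝ) : UnitAddCircle)

lemma tr_mul (q r : ℕ) (hq : 0 < q) : q • tr (q * r) = tr r := by
  unfold tr
  rw [← AddCircle.coe_nsmul]
  congr 1
  have : (q : ℝ) ≠ 0 := by positivity
  simp only [nsmul_eq_mul]
  push_cast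
  rw [one_div, mul_inv, ← mul_assoc, mul_inv_cancel₀ this, one_mul, one_div]

lemma tr_one : tr 1 = 0 := by
  unfold tr
  simpa using AddCircle.coe_period (1 : ℝ)

lemma nsmul_tr (q : ℕ) (hq : 0 < q) : q • tr q = 0 := by
  have := tr_mul q 1 hq
  rwa [mul_one, tr_one] at this

/-- Sum of the translates of `ν` by the `q`-torsion. -/
noncomputable def sig (q : ℕ) (ν : Measure UnitAddCircle) : Measure UnitAddCircle :=
  ∑ j ∈ Finset.range q, ν.map (fun x => x + j • tr q)

lemma lint_sig (q : ℕ) (ν : Measure UnitAddCircle) {f : UnitAddCircle → ℝ≥0∞}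
    (hf : Measurable f) :
    ∫⁻ x, f x ∂(sig q ν) = ∑ j ∈ Finset.range q, ∫⁻ x, f (x + j • tr q) ∂ν := by
  unfold sig
  rw [lintegral_finsetSum_measure]
  refine Finset.sum_congr rfl fun j _ => ?_
  rw [lintegral_map hf (measurable_add_const _)]

instance (q : ℕ) (ν : Measure UnitAddCircle) [IsFiniteMeasure ν] : IsFiniteMeasure (sig q ν) := by
  unfold sig; infer_instance

lemma sum_range_shift {M : Type*} [AddCommMonoid M] (q : ℕ) (F : ℕ → M) (h : F q = F 0) :
    ∑ j ∈ Finset.range q, F (j + 1) = ∑ j ∈ Finset.range q, F j := by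
  cases q with
  | zero => simp
  | succ k =>
    rw [Finset.sum_range_succ, Finset.sum_range_succ' (f := F), h]

lemma sum_range_mul' {M : Type*} [AddCommMonoid M] (q r : ℕ) (F : ℕ → M) :
    ∑ k ∈ Finset.range (q * r), F k
      = ∑ j ∈ Finset.range q, ∑ i ∈ Finset.range r, F (j * r + i) := by
  induction q with
  | zero => simp
  | succ q ih => rw [Nat.succ_mul, Finset.sum_range_add, ih, Finset.sum_range_succ]

lemma lint_sig_shift (q : ℕ) (hq : 0 < q) (ν : Measure UnitAddCircle) {f : UnitAddCircle → ℝ≥0∞}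
    (hf : Measurable f) :
    ∫⁻ x, f (x + tr q) ∂(sig q ν) = ∫⁻ x, f x ∂(sig q ν) := by
  rw [lint_sig q ν hf, lint_sig q ν (f := fun x => f (x + tr q)) (hf.comp (measurable_add_const _))]
  rw [← sum_range_shift q (fun j => ∫⁻ x, f (x + j • tr q) ∂ν)]
  · refine Finset.sum_congr rfl fun j _ => ?_
    simp only [succ_nsmul, add_assoc, Function.comp]
  · simp [nsmul_tr q hq]

lemma map_sig_shift (q : ℕ) (hq : 0 < q) (ν : Measure UnitAddCircle) :
    (sig q ν).map (fun x => x + tr q) = sig q ν := by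
  refine Measure.ext_of_lintegral _ fun f hf => ?_
  rw [lintegral_map hf (measurable_add_const _)]
  exact lint_sig_shift q hq ν hf

lemma map_shift_nsmul (ρ : Measure UnitAddCircle) (t : UnitAddCircle)
    (h : ρ.map (fun x => x + t) = ρ) (j : ℕ) : ρ.map (fun x => x + j • t) = ρ := by
  induction j with
  | zero => simp
  | succ j ih =>
    have : (fun x => x + (j + 1) • t) = (fun x : UnitAddCircle => x + t) ∘ (fun x => x + j • t) := by
      funext x; simp [succ_nsmul, add_assoc]
    rw [this, ← Measure.map_map (measurable_add_const _) (measurable_add_const _), ih, h]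

lemma le_sig (q : ℕ) (hq : 0 < q) (ν : Measure UnitAddCircle) : ν ≤ sig q ν := by
  unfold sig
  calc ν = ν.map (fun x => x + 0 • tr q) := by simp
    _ ≤ _ := by
      refine Measure.le_iff.2 fun s hs => ?_
      rw [Measure.finsetSum_apply]
      exact Finset.single_le_sum (f := fun j : ℕ => (ν.map (fun x => x + j • tr q)) s)
        (fun _ _ => zero_le) (Finset.mem_range.2 hq)

lemma nsmul_mod (q : ℕ) (hq : 0 < q) (k : ℕ) : (k % q) • tr q = k • tr q := by
  conv_rhs => rw [← Nat.mod_add_div k q]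
  rw [add_nsmul, mul_comm, mul_nsmul', nsmul_tr q hq]; simp

lemma map_sig_coprime (q a : ℕ) (hq : 0 < q) (h : Nat.Coprime a q) (ν : Measure UnitAddCircle) :
    (sig q ν).map (mT a) = sig q (ν.map (mT a)) := by
  refine Measure.ext_of_lintegral _ fun f hf => ?_
  rw [lintegral_map hf (measurable_mT a), lint_sig q _ hf, lint_sig q _ (f := fun x => f (mT a x)) (hf.comp (measurable_mT a))]
  refine Finset.sum_nbij (fun j => a * j % q) ?_ ?_ ?_ ?_
  · intro j _; simp [Nat.mod_lt _ hq]
  · intro i hi j hj hij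
    have hi' := Finset.mem_range.1 (Finset.mem_coe.1 hi)
    have hj' := Finset.mem_range.1 (Finset.mem_coe.1 hj)
    have : a * i ≡ a * j [MOD q] := hij
    have := Nat.ModEq.cancel_left_of_coprime (by simpa [Nat.Coprime, Nat.gcd_comm] using h) this
    rwa [Nat.ModEq, Nat.mod_eq_of_lt hi', Nat.mod_eq_of_lt hj'] at this
  · have hinj : Set.InjOn (fun j => a * j % q) (Finset.range q : Set ℕ) := by
      intro i hi j hj hij
      have hi' := Finset.mem_range.1 (Finset.mem_coe.1 hi)
      have hj' := Finset.mem_range.1 (Finset.mem_coe.1 hj)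
      have : a * i ≡ a * j [MOD q] := hij
      have := Nat.ModEq.cancel_left_of_coprime (by simpa [Nat.Coprime, Nat.gcd_comm] using h) this
      rwa [Nat.ModEq, Nat.mod_eq_of_lt hi', Nat.mod_eq_of_lt hj'] at this
    exact Finset.surjOn_of_injOn_of_card_le _ (fun j _ => by simp [Nat.mod_lt _ hq]) hinj le_rfl
  · intro j _
    rw [lintegral_map (f := fun x => f (x + (a * j % q) • tr q)) (hf.comp (measurable_add_const _)) (measurable_mT a)]
    simp only [mT, nsmul_mod q hq, nsmul_add, mul_nsmul']

lemma map_sig_mul (q r : ℕ) (hq : 0 < q) (hr : 0 < r) (ν : Measure UnitAddCircle) :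
    (sig (q * r) ν).map (mT q) = (q : ℝ≥0∞) • sig r (ν.map (mT q)) := by
  refine Measure.ext_of_lintegral _ fun f hf => ?_
  rw [lintegral_map hf (measurable_mT q), lintegral_smul_measure, lint_sig r _ hf,
    lint_sig _ _ (f := fun x => f (mT q x)) (hf.comp (measurable_mT q)), sum_range_mul']
  have : ∀ j ∈ Finset.range q, ∑ i ∈ Finset.range r,
      ∫⁻ x, f (mT q (x + (j * r + i) • tr (q * r))) ∂ν =
      ∑ i ∈ Finset.range r, ∫⁻ x, f (x + i • tr r) ∂(ν.map (mT q)) := by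
    intro j _
    refine Finset.sum_congr rfl fun i _ => ?_
    rw [lintegral_map (f := fun x => f (x + i • tr r)) (hf.comp (measurable_add_const _)) (measurable_mT q)]
    congr 1
    funext x
    simp only [mT, nsmul_add]
    congr 2
    rw [← mul_nsmul', mul_comm, mul_nsmul', tr_mul q r hq, add_nsmul, mul_nsmul', nsmul_tr r hr]
    simp
  rw [Finset.sum_congr rfl this]
  simp

lemma map_sig_self (q : ℕ) (hq : 0 < q) (ν : Measure UnitAddCircle) :
    (sig q ν).map (mT q) = (q : ℝ≥0∞) • (ν.map (mT q)) := by
  have := map_sig_mul q 1 hq one_pos ν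
  rw [mul_one] at this
  rw [this]
  congr 1
  simp [sig, tr_one]

/-- Measurable section of multiplication by `q`. -/
noncomputable def sec (q : ℕ) (y : UnitAddCircle) : UnitAddCircle :=
  (((AddCircle.equivIco 1 0 y : ℝ) / q : ℝ) : UnitAddCircle)

lemma measurable_sec (q : ℕ) : Measurable (sec q) := by
  unfold sec
  have h1 : Measurable fun y : UnitAddCircle => ((AddCircle.equivIco 1 0 y : Set.Ico (0:ℝ) (0+1)) : ℝ) :=
    measurable_subtype_coe.comp (AddCircle.measurableEquivIco 1 0).measurable
  exact (AddCircle.measurable_mk').comp (h1.div_const _)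

lemma mT_sec (q : ℕ) (hq : 0 < q) (y : UnitAddCircle) : mT q (sec q y) = y := by
  unfold mT sec
  rw [← AddCircle.coe_nsmul, nsmul_eq_mul, mul_div_cancel₀]
  · exact (AddCircle.equivIco 1 0).symm_apply_apply y
  · positivity

lemma exists_eq_add_of_mT_eq (q : ℕ) (hq : 0 < q) {x y : UnitAddCircle} (h : mT q x = mT q y) :
    ∃ j : ℕ, j < q ∧ x = y + j • tr q := by
  have h0 : q • (x - y) = 0 := by
    rw [nsmul_sub]; exact sub_eq_zero.2 h
  obtain ⟨a, ha⟩ := QuotientAddGroup.mk_surjective (x - y)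
  have ha : ((a : ℝ) : UnitAddCircle) = x - y := ha
  rw [← ha, ← AddCircle.coe_nsmul, AddCircle.coe_eq_zero_iff] at h0
  obtain ⟨n, hn⟩ := h0
  have hq' : (q : ℝ) ≠ 0 := by positivity
  have ha' : a = n * (1 / q : ℝ) := by
    simp only [nsmul_eq_mul, zsmul_eq_mul, mul_one] at hn
    field_simp; linarith
  have h1 : x - y = n • tr q := by
    rw [← ha, ha', tr, ← AddCircle.coe_zsmul]; simp
  refine ⟨(n % q).toNat, ?_, ?_⟩
  · have := Int.emod_lt_of_pos n (b := q) (by exact_mod_cast hq)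
    have := Int.emod_nonneg n (b := q) (by exact_mod_cast hq.ne')
    omega
  · have h2 : ((n % q).toNat : ℤ) = n % q :=
      Int.toNat_of_nonneg (Int.emod_nonneg n (by exact_mod_cast hq.ne'))
    have h3 : (n % q) • tr q = n • tr q := by
      conv_rhs => rw [← Int.emod_add_mul_ediv n q]
      rw [add_zsmul, mul_comm, mul_zsmul, natCast_zsmul, nsmul_tr q hq]; simp
    rw [← natCast_zsmul, h2, h3, ← h1]; abel

/-- A `1/q`-translation invariant measure is determined by its image under `×q`. -/
lemma inv_ext (q : ℕ) (hq : 0 < q) (ρ₁ ρ₂ : Measure UnitAddCircle)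
    (h₁ : ρ₁.map (fun x => x + tr q) = ρ₁) (h₂ : ρ₂.map (fun x => x + tr q) = ρ₂)
    (h : ρ₁.map (mT q) = ρ₂.map (mT q)) : ρ₁ = ρ₂ := by
  refine Measure.ext_of_lintegral _ fun f hf => ?_
  have key : ∀ ρ : Measure UnitAddCircle, ρ.map (fun x => x + tr q) = ρ →
      q * ∫⁻ x, f x ∂ρ
        = ∫⁻ y, (∑ j ∈ Finset.range q, f (sec q y + j • tr q)) ∂(ρ.map (mT q)) := by
    intro ρ hρ
    have hm : Measurable fun x => (∑ j ∈ Finset.range q, f (x + j • tr q)) :=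
      Finset.measurable_sum _ fun j _ => hf.comp (measurable_add_const _)
    rw [lintegral_map (f := fun y => ∑ j ∈ Finset.range q, f (sec q y + j • tr q)) (hm.comp (measurable_sec q)) (measurable_mT q)]
    have hper : ∀ x, (∑ j ∈ Finset.range q, f (sec q (mT q x) + j • tr q))
        = ∑ j ∈ Finset.range q, f (x + j • tr q) := by
      intro x
      obtain ⟨k, -, hk⟩ := exists_eq_add_of_mT_eq q hq (mT_sec q hq (mT q x))
      rw [hk]
      clear hk
      induction k with
      | zero => simp
      | succ k ih =>
        rw [← ih, ← sum_range_shift q (fun j => f (x + k • tr q + j • tr q))]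
        · refine Finset.sum_congr rfl fun j _ => ?_
          congr 1; simp only [succ_nsmul]; abel
        · simp [nsmul_tr q hq]
    simp only [Function.comp, hper]
    rw [lintegral_finsetSum (f := fun (j : ℕ) x => f (x + j • tr q)) _ fun j _ => hf.comp (measurable_add_const _)]
    have : ∀ j ∈ Finset.range q, ∫⁻ x, f (x + j • tr q) ∂ρ = ∫⁻ x, f x ∂ρ := by
      intro j _
      conv_rhs => rw [← map_shift_nsmul ρ (tr q) hρ j]
      rw [lintegral_map hf (measurable_add_const _)]
    rw [Finset.sum_congr rfl this]; simp
  have e := (key ρ₁ h₁).trans ((congrArg (fun m => ∫⁻ y, (∑ j ∈ Finset.range q, f (sec q y + j • tr q)) ∂m) h).trans (key ρ₂ h₂).symm)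
  exact (ENNReal.mul_right_inj (by exact_mod_cast hq.ne') (by simp)).1 e

/-- Conditional probability of a point in its fibre under `×q`. -/
noncomputable def jac (q : ℕ) (ν : Measure UnitAddCircle) : UnitAddCircle → ℝ≥0∞ :=
  ν.rnDeriv (sig q ν)

lemma measurable_jac (q : ℕ) (ν : Measure UnitAddCircle) : Measurable (jac q ν) :=
  Measure.measurable_rnDeriv _ _

lemma withDensity_jac (q : ℕ) (hq : 0 < q) (ν : Measure UnitAddCircle) [IsFiniteMeasure ν] :
    (sig q ν).withDensity (jac q ν) = ν := by
  haveI h1 : IsFiniteMeasure (sig q ν) := inferInstance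
  haveI h2 : SigmaFinite (sig q ν) := inferInstance
  haveI : ν.HaveLebesgueDecomposition (sig q ν) := Measure.haveLebesgueDecomposition_of_sigmaFinite _ _
  exact
  Measure.withDensity_rnDeriv_eq ν (sig q ν) (Measure.absolutelyContinuous_of_le (le_sig q hq ν))

lemma lint_jac (q : ℕ) (hq : 0 < q) (ν : Measure UnitAddCircle) [IsFiniteMeasure ν]
    {f : UnitAddCircle → ℝ≥0∞} (hf : Measurable f) :
    ∫⁻ x, f x ∂ν = ∫⁻ x, jac q ν x * f x ∂(sig q ν) := by
  conv_lhs => rw [← withDensity_jac q hq ν]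
  rw [lintegral_withDensity_eq_lintegral_mul _ (measurable_jac q ν) hf]
  rfl

lemma jac_le_one_sig (q : ℕ) (hq : 0 < q) (ν : Measure UnitAddCircle) [IsFiniteMeasure ν] :
    ∀ᵐ x ∂(sig q ν), jac q ν x ≤ 1 := Measure.rnDeriv_le_one_of_le (le_sig q hq ν)

lemma jac_le_one (q : ℕ) (hq : 0 < q) (ν : Measure UnitAddCircle) [IsFiniteMeasure ν] :
    ∀ᵐ x ∂ν, jac q ν x ≤ 1 :=
  (Measure.absolutelyContinuous_of_le (le_sig q hq ν)).ae_le (jac_le_one_sig q hq ν)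

lemma withDensity_jac_comp (q r : ℕ) (hq : 0 < q) (hr : 0 < r) (ν : Measure UnitAddCircle)
    [IsFiniteMeasure ν] :
    (sig (q * r) ν).withDensity (fun x => jac r (ν.map (mT q)) (mT q x)) = sig q ν := by
  have hm : Measurable (fun x => jac r (ν.map (mT q)) (mT q x)) :=
    (measurable_jac _ _).comp (measurable_mT q)
  apply inv_ext q hq
  · have hinv : (sig (q * r) ν).map (fun x => x + tr q) = sig (q * r) ν := by
      have := map_shift_nsmul _ _ (map_sig_shift (q * r) (Nat.mul_pos hq hr) ν) r
      rwa [mul_comm q r, tr_mul r q hr, mul_comm r q] at this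
    refine Measure.ext_of_lintegral _ fun f hf => ?_
    rw [lintegral_map hf (measurable_add_const _),
      lintegral_withDensity_eq_lintegral_mul _ hm (g := fun x => f (x + tr q)) (hf.comp (measurable_add_const _)),
      lintegral_withDensity_eq_lintegral_mul _ hm hf]
    conv_rhs => rw [← hinv]
    rw [lintegral_map (hm.mul hf) (measurable_add_const _)]
    congr 1; funext x
    simp [mT, nsmul_add, nsmul_tr q hq]
  · exact map_sig_shift q hq ν
  · rw [map_sig_self q hq]
    refine Measure.ext_of_lintegral _ fun f hf => ?_
    rw [lintegral_map hf (measurable_mT q),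
      lintegral_withDensity_eq_lintegral_mul _ hm (g := fun x => f (mT q x)) (hf.comp (measurable_mT q)),
      lintegral_smul_measure, lint_jac r hr (ν.map (mT q)) hf]
    have := congrArg (fun m => ∫⁻ x, jac r (ν.map (mT q)) x * f x ∂m) (map_sig_mul q r hq hr ν)
    simp only [lintegral_smul_measure] at this
    rw [lintegral_map (f := fun x => jac r (ν.map (mT q)) x * f x) ((measurable_jac _ _).mul hf) (measurable_mT q)] at this
    exact this

lemma jac_mul (q r : ℕ) (hq : 0 < q) (hr : 0 < r) (ν : Measure UnitAddCircle)
    [IsFiniteMeasure ν] :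
    ∀ᵐ x ∂ν, jac (q * r) ν x = jac q ν x * jac r (ν.map (mT q)) (mT q x) := by
  have hm : Measurable (fun x => jac r (ν.map (mT q)) (mT q x)) :=
    (measurable_jac _ _).comp (measurable_mT q)
  refine (Measure.absolutelyContinuous_of_le (le_sig (q * r) (Nat.mul_pos hq hr) ν)).ae_le ?_
  have h : (sig (q * r) ν).withDensity
      (fun x => jac r (ν.map (mT q)) (mT q x) * jac q ν x) = ν := by
    have := withDensity_mul (sig (q * r) ν) hm (measurable_jac q ν)
    have h2 : ((fun x => jac r (ν.map (mT q)) (mT q x)) * jac q ν)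
      = (fun x => jac r (ν.map (mT q)) (mT q x) * jac q ν x) := rfl
    rw [← h2, this, withDensity_jac_comp q r hq hr ν, withDensity_jac q hq ν]
  have h3 := Measure.rnDeriv_withDensity (sig (q * r) ν) (hm.mul (measurable_jac q ν))
  have h4 : ((fun x => jac r (ν.map (mT q)) (mT q x)) * jac q ν)
      = (fun x => jac r (ν.map (mT q)) (mT q x) * jac q ν x) := rfl
  rw [h4, h] at h3
  filter_upwards [h3] with x hx
  unfold jac at *
  rw [hx, mul_comm]

/-- Collision probability on fibres of `×q`. -/
noncomputable def kap (q : ℕ) (ν : Measure UnitAddCircle) : ℝ≥0∞ := ∫⁻ x, jac q ν x ∂ν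

lemma kap_eq_sq (q : ℕ) (hq : 0 < q) (ν : Measure UnitAddCircle) [IsFiniteMeasure ν] :
    kap q ν = ∫⁻ x, jac q ν x * jac q ν x ∂(sig q ν) := lint_jac q hq ν (measurable_jac q ν)

lemma kap_le (q : ℕ) (hq : 0 < q) (ν : Measure UnitAddCircle) [IsProbabilityMeasure ν] :
    kap q ν ≤ 1 := by
  calc kap q ν ≤ ∫⁻ _, 1 ∂ν := lintegral_mono_ae (jac_le_one q hq ν)
    _ = 1 := by simp

instance (q : ℕ) (ν : Measure UnitAddCircle) [IsProbabilityMeasure ν] :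
    IsProbabilityMeasure (ν.map (mT q)) :=
  Measure.isProbabilityMeasure_map (measurable_mT q).aemeasurable

lemma kap_map_le (q a : ℕ) (hq : 0 < q) (h : Nat.Coprime a q) (ν : Measure UnitAddCircle)
    [IsProbabilityMeasure ν] : kap q (ν.map (mT a)) ≤ kap q ν := by
  set g := jac q ν
  set g' := jac q (ν.map (mT a))
  have hg : Measurable g := measurable_jac _ _
  have hg' : Measurable g' := measurable_jac _ _
  have e1 : kap q (ν.map (mT a)) = ∫⁻ x, g x * g' (mT a x) ∂(sig q ν) := by
    unfold kap
    rw [lintegral_map hg' (measurable_mT a), lint_jac q hq ν (f := fun x => g' (mT a x)) (hg'.comp (measurable_mT a))]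
  have e2 : kap q (ν.map (mT a)) = ∫⁻ x, g' (mT a x) * g' (mT a x) ∂(sig q ν) := by
    rw [kap_eq_sq q hq, ← map_sig_coprime q a hq h ν,
      lintegral_map (f := fun x => g' x * g' x) (hg'.mul hg') (measurable_mT a)]
  have e3 : kap q ν = ∫⁻ x, g x * g x ∂(sig q ν) := kap_eq_sq q hq ν
  have hfin : kap q (ν.map (mT a)) ≠ ∞ := ((kap_le q hq _).trans_lt one_lt_top).ne
  have : kap q (ν.map (mT a)) + kap q (ν.map (mT a)) ≤ kap q (ν.map (mT a)) + kap q ν := by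
    conv_lhs => rw [e1]
    rw [e2, e3, ← lintegral_add_left (by fun_prop), ← lintegral_add_left (by fun_prop)]
    refine lintegral_mono fun x => ?_
    have amgm : ∀ a b : ℝ≥0∞, a * b + a * b ≤ b * b + a * a := by
      intro a b
      rcases le_total a b with hab | hab
      · obtain ⟨c, rfl⟩ := exists_add_of_le hab
        calc a * (a + c) + a * (a + c) ≤ a * (a + c) + a * (a + c) + c * c := le_self_add
          _ = _ := by ring
      · obtain ⟨c, rfl⟩ := exists_add_of_le hab
        calc (b + c) * b + (b + c) * b ≤ (b + c) * b + (b + c) * b + c * c := le_self_add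
          _ = _ := by ring
    exact amgm _ _
  exact (ENNReal.add_le_add_iff_left hfin).1 this

/-- `×q` is essentially injective for `ν`. -/
def Triv (q : ℕ) (ν : Measure UnitAddCircle) : Prop := ∀ᵐ x ∂ν, jac q ν x = 1

lemma triv_of_kap (q : ℕ) (hq : 0 < q) (ν : Measure UnitAddCircle) [IsProbabilityMeasure ν]
    (h : kap q ν = 1) : Triv q ν := by
  have h1 : ∫⁻ x, 1 ∂ν ≤ ∫⁻ x, jac q ν x ∂ν := by simpa [kap] using h.ge
  have := ae_eq_of_ae_le_of_lintegral_le (jac_le_one q hq ν)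
    (by rw [← kap, h]; simp) aemeasurable_const h1
  exact this

lemma triv_mul_iff (q r : ℕ) (hq : 0 < q) (hr : 0 < r) (ν : Measure UnitAddCircle)
    [IsProbabilityMeasure ν] :
    Triv (q * r) ν ↔ Triv q ν ∧ Triv r (ν.map (mT q)) := by
  have hae : Triv r (ν.map (mT q)) ↔ ∀ᵐ x ∂ν, jac r (ν.map (mT q)) (mT q x) = 1 := by
    unfold Triv
    rw [ae_map_iff (measurable_mT q).aemeasurable
      (measurableSet_eq_fun (measurable_jac _ _) measurable_const)]
  have h1 := jac_le_one q hq ν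
  have h2 : ∀ᵐ x ∂ν, jac r (ν.map (mT q)) (mT q x) ≤ 1 := by
    have := jac_le_one r hr (ν.map (mT q))
    rwa [ae_map_iff (measurable_mT q).aemeasurable
      (measurableSet_le (measurable_jac _ _) measurable_const)] at this
  rw [hae]
  constructor
  · intro h
    constructor
    · filter_upwards [h, h1, h2, jac_mul q r hq hr ν] with x a1 a2 a3 a4
      rw [a1] at a4
      refine le_antisymm a2 ?_
      rw [a4]; exact mul_le_of_le_one_right' a3
    · filter_upwards [h, h1, h2, jac_mul q r hq hr ν] with x a1 a2 a3 a4
      rw [a1] at a4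
      refine le_antisymm a3 ?_
      rw [a4]; exact mul_le_of_le_one_left' a2
  · rintro ⟨b1, b2⟩
    filter_upwards [b1, b2, jac_mul q r hq hr ν] with x a1 a2 a4
    rw [a4, a1, a2, one_mul]

lemma map_mT_mT (a b : ℕ) (ν : Measure UnitAddCircle) :
    (ν.map (mT a)).map (mT b) = ν.map (mT (a * b)) := by
  rw [Measure.map_map (measurable_mT b) (measurable_mT a)]
  congr 1; funext x; simp [mT, mul_nsmul]

lemma kap_triv (K d : ℕ) (hK : 0 < K) (hd : 0 < d) (ν : Measure UnitAddCircle)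
    [IsProbabilityMeasure ν] (h1 : Triv d ν) (h2 : Triv d (ν.map (mT K))) :
    kap K (ν.map (mT d)) = kap K ν := by
  have e1 : kap K (ν.map (mT d)) = kap (d * K) ν := by
    unfold kap
    rw [lintegral_map (measurable_jac _ _) (measurable_mT d)]
    refine lintegral_congr_ae ?_
    filter_upwards [h1, jac_mul d K hd hK ν] with x a1 a2
    rw [a2, a1, one_mul]
  have e2 : kap K ν = kap (K * d) ν := by
    unfold kap
    refine lintegral_congr_ae ?_
    unfold Triv at h2
    rw [ae_map_iff (measurable_mT K).aemeasurable
      (measurableSet_eq_fun (measurable_jac _ _) measurable_const)] at h2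
    filter_upwards [h2, jac_mul K d hK hd ν] with x a1 a2
    rw [a2, a1, mul_one]
  rw [e1, e2, mul_comm]

end RJ


namespace RJ

lemma lte (K α β : ℕ) (hα : α.Coprime K) (hβ : β.Coprime K)
    (hα0 : 0 < α) (hβ0 : 0 < β) (hK : 2 ≤ K)
    (hne : α ≠ β) : ∃ D : ℕ, 0 < D ∧ ∀ (r N : ℕ) (ξ : ℤ), 0 < N → ξ ≠ 0 →
      (K : ℤ) ^ r ∣ ξ * ((α : ℤ) ^ N - (β : ℤ) ^ N) → (K : ℤ) ^ r ∣ ξ * D * N := by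
  set e := 2 * Nat.totient K with he
  have he0 : e ≠ 0 := by
    have := Nat.totient_pos.2 (show 0 < K by omega)
    omega
  set x : ℤ := (α : ℤ) ^ e with hx
  set y : ℤ := (β : ℤ) ^ e with hy
  have hxy : x ≠ y := by
    intro h
    have h' : α ^ e = β ^ e := by
      rw [hx, hy] at h
      exact_mod_cast h
    exact hne (Nat.pow_left_injective he0 h')
  refine ⟨(x - y).natAbs, Int.natAbs_pos.2 (sub_ne_zero.2 hxy), ?_⟩
  intro r N ξ hN hξ hdvd
  have h1 : (K : ℤ) ^ r ∣ ξ * (x ^ N - y ^ N) := by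
    refine hdvd.trans (mul_dvd_mul_left _ ?_)
    rw [hx, hy, ← pow_mul, ← pow_mul, mul_comm e N, pow_mul (α : ℤ) N e, pow_mul (β : ℤ) N e]
    exact sub_dvd_pow_sub_pow _ _ _
  suffices h : (K : ℤ) ^ r ∣ ξ * (x - y) * N by
    rw [← Int.natAbs_dvd_natAbs] at h ⊢
    simpa only [Int.natAbs_mul, Int.natAbs_natCast] using h
  have hcong : ∀ γ : ℕ, γ.Coprime K → (K : ℤ) ∣ (γ : ℤ) ^ e - 1 := by
    intro γ hγ
    have := Nat.ModEq.pow_totient hγ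
    have h2 := this.pow 2
    rw [one_pow, ← pow_mul, mul_comm] at h2
    have := (Nat.modEq_iff_dvd.1 h2.symm)
    push_cast at this
    exact this
  have hKxy : (K : ℤ) ∣ x - y := by
    have := dvd_sub (hcong α hα) (hcong β hβ)
    rwa [sub_sub_sub_cancel_right] at this
  rw [← Int.natAbs_dvd_natAbs] at h1 ⊢
  rw [Nat.dvd_iff_prime_pow_dvd_dvd]
  intro p k hp hpk
  rcases Nat.eq_zero_or_pos k with rfl | hk
  · simp
  have hpK : p ∣ K := by
    rw [Int.natAbs_pow, Int.natAbs_natCast] at hpk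
    exact hp.dvd_of_dvd_pow ((dvd_pow_self p hk.ne').trans hpk)
  have hpx : ¬ (p : ℤ) ∣ x := by
    rw [hx]; norm_cast
    intro h
    have := Nat.dvd_gcd (hp.dvd_of_dvd_pow h) hpK
    rw [hα] at this
    exact hp.one_lt.ne' (Nat.dvd_one.1 this)
  have hpxy : (p : ℤ) ∣ x - y := (Int.natCast_dvd_natCast.2 hpK).trans hKxy
  have hpp : Prime (p : ℤ) := Nat.prime_iff_prime_int.1 hp
  have hem : emultiplicity (p : ℤ) (x ^ N - y ^ N)
      = emultiplicity (p : ℤ) (x - y) + emultiplicity (p : ℤ) (N : ℤ) := by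
    rcases hp.eq_two_or_odd' with rfl | hodd
    · have h4 : ∀ γ : ℕ, γ.Coprime K → (4 : ℤ) ∣ (γ : ℤ) ^ e - 1 := by
        intro γ hγ
        have hγo : Odd γ := by
          rw [← Nat.not_even_iff_odd, even_iff_two_dvd]
          intro h
          have := Nat.dvd_gcd h hpK
          rw [hγ] at this
          omega
        have ho : Odd ((γ : ℤ) ^ Nat.totient K) := by
          exact_mod_cast hγo.pow
        obtain ⟨w, hw⟩ := ho
        refine ⟨w * w + w, ?_⟩
        rw [he, mul_comm, pow_mul, hw]
        ring
      have h4xy : (4 : ℤ) ∣ x - y := by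
        have := dvd_sub (h4 α hα) (h4 β hβ)
        rwa [sub_sub_sub_cancel_right] at this
      have := Int.two_pow_sub_pow' (x := x) (y := y) N h4xy (by exact_mod_cast hpx)
      simpa using this
    · have := Int.emultiplicity_pow_sub_pow hp hodd hpxy hpx N
      rw [this, Int.natCast_emultiplicity]
  have h2 : ((p : ℤ)) ^ k ∣ ξ * (x ^ N - y ^ N) := by
    rw [← Int.natAbs_dvd_natAbs, Int.natAbs_pow, Int.natAbs_natCast]
    exact hpk.trans h1
  rw [pow_dvd_iff_le_emultiplicity, emultiplicity_mul hpp, hem, ← add_assoc,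
    ← emultiplicity_mul hpp, ← emultiplicity_mul hpp, ← pow_dvd_iff_le_emultiplicity,
    ← Int.natAbs_dvd_natAbs, Int.natAbs_pow, Int.natAbs_natCast] at h2
  exact h2

lemma jac_pow (K : ℕ) (hK : 0 < K) (ν : Measure UnitAddCircle) [IsProbabilityMeasure ν] (r : ℕ) :
    ∀ᵐ x ∂ν, jac (K ^ r) ν x
      ≤ ∏ j ∈ Finset.range r, jac K (ν.map (mT (K ^ j))) (mT (K ^ j) x) := by
  induction r with
  | zero => simpa using jac_le_one 1 one_pos ν
  | succ r ih =>
    have := jac_mul (K ^ r) K (pow_pos hK r) hK ν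
    filter_upwards [ih, this] with x h1 h2
    rw [Finset.prod_range_succ, pow_succ, h2]
    gcongr

lemma good_mass (K : ℕ) (hK : 0 < K) (ν : Measure UnitAddCircle) [IsProbabilityMeasure ν]
    (c : ℝ) (hc0 : 0 ≤ c) (hc1 : c ≤ 1) (r : ℕ) (hr : 0 < r)
    (h : ∀ j, kap K (ν.map (mT (K ^ j))) ≤ ENNReal.ofReal (1 - c)) :
    c / 2 ≤ ν.real {x | jac (K ^ r) ν x ≤ ENNReal.ofReal (Real.exp (-(c * r / 2)))} := by
  set A := {x | jac (K ^ r) ν x ≤ ENNReal.ofReal (Real.exp (-(c * r / 2)))} with hA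
  have hAm : MeasurableSet A := measurableSet_le (measurable_jac _ _) measurable_const
  set F : ℕ → UnitAddCircle → ℝ≥0∞ := fun j x => jac K (ν.map (mT (K ^ j))) (mT (K ^ j) x) with hF
  have hFm : ∀ j, Measurable (F j) := fun j => (measurable_jac _ _).comp (measurable_mT _)
  have hF1 : ∀ᵐ x ∂ν, ∀ j, F j x ≤ 1 := by
    rw [ae_all_iff]; intro j
    have := jac_le_one K hK (ν.map (mT (K ^ j)))
    rwa [ae_map_iff (measurable_mT _).aemeasurable
      (measurableSet_le (measurable_jac _ _) measurable_const)] at this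
  have hFi : ∀ j, Integrable (fun x => (F j x).toReal) ν := by
    intro j
    refine Integrable.of_bound (C := 1) (hFm j).ennreal_toReal.aestronglyMeasurable ?_
    filter_upwards [hF1] with x hx
    rw [Real.norm_of_nonneg ENNReal.toReal_nonneg]
    exact ENNReal.toReal_le_of_le_ofReal zero_le_one (by simpa using hx j)
  have hFint : ∀ j, ∫ x, (F j x).toReal ∂ν ≤ 1 - c := by
    intro j
    rw [integral_toReal (hFm j).aemeasurable (hF1.mono fun x hx => (hx j).trans_lt one_lt_top)]
    refine ENNReal.toReal_le_of_le_ofReal (by linarith) ?_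
    have := h j
    unfold kap at this
    rwa [lintegral_map (measurable_jac _ _) (measurable_mT _)] at this
  have hZ : c * r ≤ ∫ x, ∑ j ∈ Finset.range r, (1 - (F j x).toReal) ∂ν := by
    rw [integral_finsetSum (f := fun j x => 1 - (F j x).toReal) _ fun j _ => (integrable_const 1).sub (hFi j)]
    calc c * r = ∑ j ∈ Finset.range r, c := by simp [mul_comm]
      _ ≤ _ := by
        refine Finset.sum_le_sum fun j _ => ?_
        rw [integral_sub (integrable_const 1) (hFi j)]
        have := hFint j
        simp; linarith
  have hle : ∫ x, ∑ j ∈ Finset.range r, (1 - (F j x).toReal) ∂ν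
      ≤ ∫ x, (c * r / 2 + A.indicator (fun _ => (r : ℝ)) x) ∂ν := by
    refine integral_mono_ae (integrable_finsetSum _ fun j _ => (integrable_const 1).sub (hFi j))
      ((integrable_const _).add ((integrable_const _).indicator hAm)) ?_
    filter_upwards [hF1, jac_pow K hK ν r] with x h1 h2
    by_cases hx : x ∈ A
    · rw [Set.indicator_of_mem hx]
      calc ∑ j ∈ Finset.range r, (1 - (F j x).toReal) ≤ ∑ j ∈ Finset.range r, (1 : ℝ) :=
            Finset.sum_le_sum fun j _ => by
              have : 0 ≤ (F j x).toReal := ENNReal.toReal_nonneg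
              linarith
          _ = r := by simp
          _ ≤ _ := by have : 0 ≤ c * r / 2 := by positivity
                      linarith
    · rw [Set.indicator_of_notMem hx, add_zero]
      by_contra hcon
      push Not at hcon
      apply hx
      rw [hA, Set.mem_ofPred_eq]
      refine h2.trans ?_
      have : ∀ j ∈ Finset.range r, F j x ≤ ENNReal.ofReal (Real.exp (-(1 - (F j x).toReal))) := by
        intro j _
        have hne : F j x ≠ ∞ := ((h1 j).trans_lt one_lt_top).ne
        conv_lhs => rw [← ENNReal.ofReal_toReal hne]
        apply ENNReal.ofReal_le_ofReal
        have := Real.add_one_le_exp (-(1 - (F j x).toReal))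
        linarith
      refine (Finset.prod_le_prod' this).trans ?_
      rw [← ENNReal.ofReal_prod_of_nonneg (fun _ _ => (Real.exp_pos _).le), ← Real.exp_sum]
      apply ENNReal.ofReal_le_ofReal
      apply Real.exp_le_exp.2
      rw [Finset.sum_neg_distrib]
      linarith
  rw [integral_add (integrable_const _) ((integrable_const _).indicator hAm),
    integral_indicator_const _ hAm] at hle
  simp only [integral_const, probReal_univ, smul_eq_mul, one_mul] at hle
  have hr' : (0 : ℝ) < r := by exact_mod_cast hr
  have : c / 2 * r ≤ ν.real A * r := by linarith
  exact le_of_mul_le_mul_right this hr'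

lemma fourier_tr (N : ℕ) (hN : 0 < N) (l : ℤ) (h : ¬ (N : ℤ) ∣ l) :
    fourier l (tr N) ≠ (1 : ℂ) := by
  intro h1
  unfold tr at h1
  rw [fourier_coe_apply, Complex.exp_eq_one_iff] at h1
  obtain ⟨k, hk⟩ := h1
  apply h
  refine ⟨k, ?_⟩
  have hN' : (N : ℂ) ≠ 0 := by exact_mod_cast hN.ne'
  have hpi : (2 * Real.pi * Complex.I : ℂ) ≠ 0 := Complex.two_pi_I_ne_zero
  have : (2 * Real.pi * Complex.I : ℂ) * (l / N) = (2 * Real.pi * Complex.I) * k := by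
    rw [mul_comm _ (k : ℂ), ← hk]
    push_cast; ring
  have := mul_left_cancel₀ hpi this
  rw [div_eq_iff hN'] at this
  have h3 : (l : ℂ) = ((N * k : ℤ) : ℂ) := by rw [this]; push_cast; ring
  exact_mod_cast h3

lemma integral_fourier_sig (N : ℕ) (hN : 0 < N) (ν : Measure UnitAddCircle)
    (l : ℤ) (h : ¬ (N : ℤ) ∣ l) :
    ∫ x, fourier l x ∂(sig N ν) = (0 : ℂ) := by
  have h1 : ∫ x, fourier l x ∂(sig N ν) = fourier l (tr N) * ∫ x, fourier l x ∂(sig N ν) := by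
    conv_lhs => rw [← map_sig_shift N hN ν]
    rw [integral_map (measurable_add_const _).aemeasurable (by fun_prop), ← integral_const_mul]
    congr 1; funext x
    simp only [fourier_apply, zsmul_add, AddCircle.toCircle_add, Circle.coe_mul, mul_comm]
  have h2 := fourier_tr N hN l h
  have : (1 - fourier l (tr N)) * ∫ x, fourier l x ∂(sig N ν) = (0 : ℂ) := by
    rw [sub_mul, one_mul, ← h1, sub_self]
  exact (mul_eq_zero.1 this).resolve_left (sub_ne_zero.2 h2.symm)

lemma sig_univ (N : ℕ) (ν : Measure UnitAddCircle) [IsProbabilityMeasure ν] :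
    (sig N ν).real Set.univ = N := by
  have := lint_sig N ν (f := fun _ => 1) measurable_const
  simp at this
  simp [Measure.real, this]

end RJ


namespace RJ

lemma integral_normSq_sig (N : ℕ) (hN : 0 < N) (ν : Measure UnitAddCircle) [IsProbabilityMeasure ν]
    (S : ℕ) (l : ℕ → ℤ)
    (hl : ∀ s < S, ∀ t < S, s ≠ t → ¬ (N : ℤ) ∣ l s - l t) :
    ∫ x, ‖∑ s ∈ Finset.range S, (fourier (l s) x : ℂ)‖ ^ 2 ∂(sig N ν) = N * S := by
  have hint : ∀ k : ℤ, Integrable (fun x : UnitAddCircle => (fourier k x : ℂ)) (sig N ν) := by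
    intro k
    refine Integrable.of_bound (C := 1) (by fun_prop) (Filter.Eventually.of_forall fun x => ?_)
    rw [fourier_apply, Circle.norm_coe]
  have h1 : ∀ x : UnitAddCircle, ((‖∑ s ∈ Finset.range S, (fourier (l s) x : ℂ)‖ ^ 2 : ℝ) : ℂ)
      = ∑ s ∈ Finset.range S, ∑ t ∈ Finset.range S, (fourier (l s - l t) x : ℂ) := by
    intro x
    push_cast
    rw [← Complex.mul_conj', map_sum, Finset.sum_mul_sum]
    refine Finset.sum_congr rfl fun s _ => Finset.sum_congr rfl fun t _ => ?_
    rw [sub_eq_add_neg, fourier_add, fourier_neg]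
  have h2 : ((∫ x, ‖∑ s ∈ Finset.range S, (fourier (l s) x : ℂ)‖ ^ 2 ∂(sig N ν) : ℝ) : ℂ)
      = ((N * S : ℝ) : ℂ) := by
    rw [← integral_complex_ofReal]
    simp_rw [h1]
    rw [integral_finsetSum _ fun s _ => integrable_finsetSum _ fun t _ => hint _]
    have : ∀ s ∈ Finset.range S, ∫ x, ∑ t ∈ Finset.range S, (fourier (l s - l t) x : ℂ) ∂(sig N ν)
        = N := by
      intro s hs
      rw [integral_finsetSum _ fun t _ => hint _, Finset.sum_eq_single s]
      · simp [sig_univ]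
      · intro t ht hts
        exact integral_fourier_sig N hN ν _ (hl s (Finset.mem_range.1 hs) t (Finset.mem_range.1 ht) hts.symm)
      · intro h; exact absurd hs h
    rw [Finset.sum_congr rfl this]
    simp [mul_comm]
  exact_mod_cast h2

lemma equi_bound (N : ℕ) (hN : 0 < N) (ν : Measure UnitAddCircle) [IsProbabilityMeasure ν]
    (S : ℕ) (hS : 0 < S) (l : ℕ → ℤ)
    (hl : ∀ s < S, ∀ t < S, s ≠ t → ¬ (N : ℤ) ∣ l s - l t) (ε : ℝ) (hε : 0 < ε) :
    ‖∫ x in {x | jac N ν x ≤ ENNReal.ofReal ε}, ∑ s ∈ Finset.range S, (fourier (l s) x : ℂ) ∂ν‖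
      ≤ Real.sqrt ε / 2 * (N + S) := by
  set A := {x | jac N ν x ≤ ENNReal.ofReal ε} with hA
  have hAm : MeasurableSet A := measurableSet_le (measurable_jac _ _) measurable_const
  set E : UnitAddCircle → ℂ := fun x => ∑ s ∈ Finset.range S, (fourier (l s) x : ℂ) with hE
  have hEc : Continuous E := by fun_prop
  have hEm : Measurable E := hEc.measurable
  have hS' : (0 : ℝ) < S := by exact_mod_cast hS
  have key : ∀ x, jac N ν x * A.indicator (fun x => ‖E x‖ₑ) x
      ≤ ENNReal.ofReal (Real.sqrt ε / 2) * (ENNReal.ofReal (‖E x‖ ^ 2 / S) + S * jac N ν x) := by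
    intro x
    by_cases hx : x ∈ A
    · rw [Set.indicator_of_mem hx]
      have hx' : jac N ν x ≤ ENNReal.ofReal ε := hx
      have hfin : jac N ν x ≠ ∞ := (hx'.trans_lt ofReal_lt_top).ne
      set g := (jac N ν x).toReal with hg
      have hg0 : 0 ≤ g := ENNReal.toReal_nonneg
      have hgε : g ≤ ε := ENNReal.toReal_le_of_le_ofReal hε.le hx'
      have e1 : jac N ν x = ENNReal.ofReal g := (ENNReal.ofReal_toReal hfin).symm
      rw [e1, ← ofReal_norm, ← ENNReal.ofReal_mul hg0, ← ENNReal.ofReal_natCast S,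
        ← ENNReal.ofReal_mul hS'.le, ← ENNReal.ofReal_add (by positivity) (by positivity),
        ← ENNReal.ofReal_mul (by positivity)]
      apply ENNReal.ofReal_le_ofReal
      set u := ‖E x‖
      have hu : 0 ≤ u := norm_nonneg _
      set a := Real.sqrt g
      set b := Real.sqrt ε
      have ha : a * a = g := Real.mul_self_sqrt hg0
      have ha0 : 0 ≤ a := Real.sqrt_nonneg _
      have hab : a ≤ b := Real.sqrt_le_sqrt hgε
      have hb0 : 0 ≤ b := Real.sqrt_nonneg _
      have h1 : 2 * a * u ≤ u ^ 2 / S + S * g := by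
        rw [← ha, div_add' _ _ _ hS'.ne', le_div_iff₀ hS']
        nlinarith [sq_nonneg (u - a * S)]
      calc g * u = a * (a * u) := by rw [← ha]; ring
        _ ≤ b * (a * u) := by gcongr
        _ = b / 2 * (2 * a * u) := by ring
        _ ≤ _ := by gcongr
    · rw [Set.indicator_of_notMem hx]; simp
  have h0 : ∫⁻ x in A, ‖E x‖ₑ ∂ν ≤ ENNReal.ofReal (Real.sqrt ε / 2 * (N + S)) := by
    rw [← lintegral_indicator hAm, lint_jac N hN ν (hEm.enorm.indicator hAm)]
    refine (lintegral_mono key).trans ?_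
    have hm1 : Measurable fun x => ENNReal.ofReal (‖E x‖ ^ 2 / S) := by fun_prop
    have hm2 := measurable_jac N ν
    rw [lintegral_const_mul _ (by fun_prop), lintegral_add_left hm1, lintegral_const_mul _ hm2]
    have e1 : ∫⁻ x, jac N ν x ∂(sig N ν) = 1 := by
      have := lint_jac N hN ν (f := fun _ => 1) measurable_const
      simpa using this.symm
    have e2 : ∫⁻ x, ENNReal.ofReal (‖E x‖ ^ 2 / S) ∂(sig N ν) = ENNReal.ofReal N := by
      rw [← ofReal_integral_eq_lintegral_ofReal]
      · rw [integral_div, integral_normSq_sig N hN ν S l hl, mul_div_cancel_right₀ _ hS'.ne']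
      · have : Continuous fun x => ‖E x‖ ^ 2 / S := by fun_prop
        exact this.integrable_of_hasCompactSupport (HasCompactSupport.of_compactSpace _)
      · exact Filter.Eventually.of_forall fun x => by positivity
    rw [e1, e2, mul_one, ← ENNReal.ofReal_natCast S, ← ENNReal.ofReal_add (by positivity) (by positivity),
        ← ENNReal.ofReal_mul (by positivity)]
  have h1 : ‖∫ x in A, E x ∂ν‖ₑ ≤ ENNReal.ofReal (Real.sqrt ε / 2 * (N + S)) :=
    (enorm_integral_le_lintegral_enorm _).trans h0
  rwa [← ofReal_norm, ENNReal.ofReal_le_ofReal_iff (by positivity)] at h1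

lemma distinct_mod (K α β D : ℕ) (hα : α.Coprime K) (hβ : β.Coprime K)
    (hD : 0 < D) (hlte : ∀ (r N : ℕ) (ξ : ℤ), 0 < N → ξ ≠ 0 →
      (K : ℤ) ^ r ∣ ξ * ((α : ℤ) ^ N - (β : ℤ) ^ N) → (K : ℤ) ^ r ∣ ξ * D * N)
    (r S Ξ : ℕ) (hS : D * Ξ * (S - 1) < K ^ r) (ξ : ℤ) (hξ : ξ ≠ 0) (hξΞ : ξ.natAbs ≤ Ξ)
    (s t : ℕ) (hs : s < S) (ht : t < S) (hst : s ≠ t) :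
    ¬ ((K ^ r : ℕ) : ℤ) ∣ ξ * (α ^ s * β ^ (S - s) : ℕ) - ξ * (α ^ t * β ^ (S - t) : ℕ) := by
  wlog hlt : s < t generalizing s t
  · intro h
    refine this t s ht hs hst.symm (by omega) ?_
    rw [← dvd_neg, neg_sub]; exact h
  intro h
  have e : ξ * ((α ^ s * β ^ (S - s) : ℕ) : ℤ) - ξ * ((α ^ t * β ^ (S - t) : ℕ) : ℤ)
      = -(((α ^ s * β ^ (S - t) : ℕ) : ℤ) * (ξ * ((α : ℤ) ^ (t - s) - (β : ℤ) ^ (t - s)))) := by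
    have e1 : S - s = (S - t) + (t - s) := by omega
    have e2 : t = s + (t - s) := by omega
    push_cast
    rw [e1]
    conv_lhs => enter [2, 2, 1]; rw [e2, pow_add]
    rw [pow_add]; ring
  rw [e, dvd_neg] at h
  have hcop : IsCoprime ((K ^ r : ℕ) : ℤ) ((α ^ s * β ^ (S - t) : ℕ) : ℤ) := by
    rw [Nat.isCoprime_iff_coprime]
    exact Nat.Coprime.pow_left _ (Nat.Coprime.mul_right (Nat.Coprime.pow_right _ hα.symm)
      (Nat.Coprime.pow_right _ hβ.symm))
  have h2 := hcop.dvd_of_dvd_mul_left h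
  push_cast at h2
  have h3 := hlte r (t - s) ξ (by omega) hξ h2
  have hne : ξ * D * ((t - s : ℕ) : ℤ) ≠ 0 := by
    refine mul_ne_zero (mul_ne_zero hξ (by exact_mod_cast hD.ne')) ?_
    have : t - s ≠ 0 := by omega
    exact_mod_cast this
  have h4 := Nat.le_of_dvd (Int.natAbs_pos.2 hne) (Int.natAbs_dvd_natAbs.2 h3)
  simp only [Int.natAbs_mul, Int.natAbs_pow, Int.natAbs_natCast] at h4
  have : ξ.natAbs * D * (t - s) ≤ Ξ * D * (S - 1) :=
    Nat.mul_le_mul (Nat.mul_le_mul_right _ hξΞ) (by omega)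
  rw [mul_comm Ξ D] at this
  omega

/-- Producing submeasures of `μ` of mass at least `c/2` with small low Fourier coefficients. -/
lemma exists_equi (μ : Measure UnitAddCircle) [IsProbabilityMeasure μ]
    (K G α β : ℕ) (hK : 2 ≤ K) (hα : α.Coprime K) (hβ : β.Coprime K) (hne : α ≠ β)
    (ha : μ.map (mT (G * α)) = μ) (hb : μ.map (mT (G * β)) = μ)
    (c : ℝ) (hc0 : 0 < c) (hc1 : c ≤ 1)
    (hkap : ∀ S j : ℕ, kap K (μ.map (mT (G ^ S * K ^ j))) ≤ ENNReal.ofReal (1 - c))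
    (Ξ : ℕ) (η : ℝ) (hη : 0 < η) :
    ∃ ρ : Measure UnitAddCircle, ρ ≤ μ ∧ c / 2 ≤ ρ.real Set.univ ∧
      ∀ ξ : ℤ, ξ ≠ 0 → ξ.natAbs ≤ Ξ → ‖∫ x, (fourier ξ x : ℂ) ∂ρ‖ ≤ η := by
  have hα0 : 0 < α := by
    rcases Nat.eq_zero_or_pos α with h | h
    · subst h; rw [Nat.coprime_zero_left] at hα; omega
    · exact h
  have hβ0 : 0 < β := by
    rcases Nat.eq_zero_or_pos β with h | h
    · subst h; rw [Nat.coprime_zero_left] at hβ; omega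
    · exact h
  wlog hΞ : 0 < Ξ generalizing Ξ
  · obtain ⟨ρ, h1, h2, h3⟩ := this 1 one_pos
    exact ⟨ρ, h1, h2, fun ξ hξ hx => h3 ξ hξ (by omega)⟩
  obtain ⟨D, hD, hlte⟩ := lte K α β hα hβ hα0 hβ0 hK hne
  -- choose r
  obtain ⟨r, hr0, hr⟩ : ∃ r : ℕ, 0 < r ∧
      Real.sqrt (Real.exp (-(c * r / 2))) / 2 * (D * Ξ + 1) ≤ η := by
    have hlim : Filter.Tendsto (fun r : ℕ => Real.sqrt (Real.exp (-(c * r / 2))) / 2 * (D * Ξ + 1))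
        Filter.atTop (nhds (Real.sqrt 0 / 2 * (D * Ξ + 1))) := by
      refine Filter.Tendsto.mul_const _ (Filter.Tendsto.div_const ?_ _)
      refine (Real.continuous_sqrt.tendsto 0).comp ?_
      refine Real.tendsto_exp_neg_atTop_nhds_zero.comp ?_
      have : Filter.Tendsto (fun r : ℕ => (c / 2) * (r : ℝ)) Filter.atTop Filter.atTop :=
        Filter.Tendsto.const_mul_atTop (by positivity) tendsto_natCast_atTop_atTop
      refine this.congr fun r => by ring
    rw [Real.sqrt_zero, zero_div, zero_mul] at hlim
    obtain ⟨r, h1, h2⟩ := ((hlim.eventually (gt_mem_nhds hη)).and (Filter.eventually_gt_atTop 0)).exists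
    exact ⟨r, h2, h1.le⟩
  set ε := Real.exp (-(c * r / 2)) with hε
  have hKr : 0 < K ^ r := pow_pos (by omega) r
  set S := (K ^ r - 1) / (D * Ξ) + 1 with hS
  have hDΞ : 0 < D * Ξ := Nat.mul_pos hD hΞ
  have hS1 : D * Ξ * (S - 1) < K ^ r := by
    have := Nat.mul_div_le (K ^ r - 1) (D * Ξ)
    rw [hS, Nat.add_sub_cancel]; omega
  have hS2 : K ^ r ≤ D * Ξ * S := by
    have := Nat.lt_mul_div_succ (K ^ r - 1) hDΞ
    rw [hS]; omega
  have hS0 : 0 < S := Nat.succ_pos _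
  set ν := μ.map (mT (G ^ S)) with hν
  have hmass := good_mass K (by omega) ν c hc0.le hc1 r hr0 (by
    intro j; rw [hν, map_mT_mT]; exact hkap S j)
  rw [← hε] at hmass
  set A := {x | jac (K ^ r) ν x ≤ ENNReal.ofReal ε} with hA
  have hAm : MeasurableSet A := measurableSet_le (measurable_jac _ _) measurable_const
  set τ : ℕ → ℕ := fun s => α ^ s * β ^ (S - s) with hτ
  have hSne : (S : ℝ≥0∞) ≠ 0 := by exact_mod_cast hS0.ne'
  have hpow : ∀ (q : ℕ), μ.map (mT q) = μ → ∀ k, μ.map (mT (q ^ k)) = μ := by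
    intro q hq k
    induction k with
    | zero =>
      have : mT (q ^ 0) = id := by funext x; simp [mT]
      rw [this, Measure.map_id]
    | succ k ih => rw [pow_succ, ← map_mT_mT, ih, hq]
  have hτμ : ∀ s < S, ν.map (mT (τ s)) = μ := by
    intro s hs
    rw [hν, map_mT_mT, hτ]
    have : G ^ S * (α ^ s * β ^ (S - s)) = (G * α) ^ s * (G * β) ^ (S - s) := by
      have : S = s + (S - s) := by omega
      conv_lhs => enter [1]; rw [this, pow_add]
      rw [mul_pow, mul_pow]; ring
    simp only [this]
    rw [← map_mT_mT, hpow _ ha, hpow _ hb]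
  refine ⟨(S : ℝ≥0∞)⁻¹ • ∑ s ∈ Finset.range S, (ν.restrict A).map (mT (τ s)), ?_, ?_, ?_⟩
  · refine Measure.le_iff.2 fun B hB => ?_
    rw [Measure.smul_apply, Measure.finsetSum_apply]
    have : ∀ s ∈ Finset.range S, ((ν.restrict A).map (mT (τ s))) B ≤ μ B := by
      intro s hs
      rw [← hτμ s (Finset.mem_range.1 hs)]
      exact Measure.map_mono Measure.restrict_le_self (measurable_mT _) B
    calc _ ≤ (S : ℝ≥0∞)⁻¹ • ∑ s ∈ Finset.range S, μ B := by
          simp only [smul_eq_mul]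
          exact mul_le_mul_right (Finset.sum_le_sum this) _
      _ = μ B := by
          simp only [Finset.sum_const, Finset.card_range, nsmul_eq_mul, smul_eq_mul]
          rw [← mul_assoc, ENNReal.inv_mul_cancel hSne (by simp), one_mul]
  · have : ((S : ℝ≥0∞)⁻¹ • ∑ s ∈ Finset.range S, (ν.restrict A).map (mT (τ s))) Set.univ = ν A := by
      rw [Measure.smul_apply, Measure.finsetSum_apply]
      have : ∀ s ∈ Finset.range S, ((ν.restrict A).map (mT (τ s))) Set.univ = ν A := by
        intro s _
        rw [Measure.map_apply (measurable_mT _) MeasurableSet.univ]; simp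
      rw [Finset.sum_congr rfl this]
      simp only [Finset.sum_const, Finset.card_range, nsmul_eq_mul, smul_eq_mul]
      rw [← mul_assoc, ENNReal.inv_mul_cancel hSne (by simp), one_mul]
    rw [Measure.real, this]; exact hmass
  · intro ξ hξ hξΞ
    have hint : ∀ (k : ℤ) (m : Measure UnitAddCircle) [IsFiniteMeasure m],
        Integrable (fun x : UnitAddCircle => (fourier k x : ℂ)) m := by
      intro k m _
      refine Integrable.of_bound (C := 1) (by fun_prop) (Filter.Eventually.of_forall fun x => ?_)
      rw [fourier_apply, Circle.norm_coe]
    rw [integral_smul_measure, integral_finsetSum_measure (fun s _ => hint _ _)]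
    have e1 : ∀ s ∈ Finset.range S, ∫ x, (fourier ξ x : ℂ) ∂((ν.restrict A).map (mT (τ s)))
        = ∫ x in A, (fourier (ξ * (τ s : ℕ)) x : ℂ) ∂ν := by
      intro s _
      rw [integral_map (measurable_mT _).aemeasurable (by fun_prop)]
      congr 1; funext x
      simp only [mT, fourier_apply, mul_zsmul, natCast_zsmul]
    rw [Finset.sum_congr rfl e1, ← integral_finsetSum _ (fun s _ => hint _ _)]
    have hb := equi_bound (K ^ r) hKr ν S hS0 (fun s => ξ * (τ s : ℕ))
      (fun s hs t ht hst => distinct_mod K α β D hα hβ hD hlte r S Ξ hS1 ξ hξ hξΞ s t hs ht hst)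
      ε (Real.exp_pos _)
    rw [norm_smul]
    have hS' : (0 : ℝ) < S := by exact_mod_cast hS0
    have e2 : ‖((S : ℝ≥0∞)⁻¹).toReal‖ = (S : ℝ)⁻¹ := by simp
    rw [e2, inv_mul_le_iff₀ hS']
    refine hb.trans ?_
    have h5 : ((K ^ r : ℕ) : ℝ) ≤ D * Ξ * S := by exact_mod_cast hS2
    calc Real.sqrt ε / 2 * (((K ^ r : ℕ) : ℝ) + S) ≤ Real.sqrt ε / 2 * (D * Ξ * S + S) := by gcongr
      _ = S * (Real.sqrt ε / 2 * (D * Ξ + 1)) := by ring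
      _ ≤ _ := by gcongr

end RJ


namespace RJ

lemma vol_univ : (volume : Measure UnitAddCircle) Set.univ = 1 := by
  rw [AddCircle.measure_univ]; simp

instance volProb : IsProbabilityMeasure (volume : Measure UnitAddCircle) := ⟨vol_univ⟩

lemma integrable_cont {m : Measure UnitAddCircle} [IsFiniteMeasure m] {F : Type*}
    [NormedAddCommGroup F] [NormedSpace ℝ F] {f : UnitAddCircle → F}
    (hf : Continuous f) : Integrable f m :=
  hf.integrable_of_hasCompactSupport (HasCompactSupport.of_compactSpace _)

lemma integral_fourier_vol (ξ : ℤ) (hξ : ξ ≠ 0) :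
    ∫ x : UnitAddCircle, (fourier ξ x : ℂ) = 0 := by
  set N := ξ.natAbs + 1
  have h : ¬ (N : ℤ) ∣ ξ := by
    intro h
    have := Nat.le_of_dvd (Int.natAbs_pos.2 hξ) (Int.natCast_dvd.1 h)
    omega
  have h1 : ∫ x : UnitAddCircle, (fourier ξ x : ℂ)
      = fourier ξ (tr N) * ∫ x : UnitAddCircle, (fourier ξ x : ℂ) := by
    conv_lhs => rw [← integral_add_right_eq_self _ (tr N)]
    rw [← integral_const_mul]
    congr 1; funext x
    simp only [fourier_apply, zsmul_add, AddCircle.toCircle_add, Circle.coe_mul, mul_comm]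
  have h2 := fourier_tr N (Nat.succ_pos _) ξ h
  have : (1 - fourier ξ (tr N)) * ∫ x : UnitAddCircle, (fourier ξ x : ℂ) = (0 : ℂ) := by
    rw [sub_mul, one_mul, ← h1, sub_self]
  exact (mul_eq_zero.1 this).resolve_left (sub_ne_zero.2 h2.symm)

lemma ge_of_equi (μ : Measure UnitAddCircle) [IsProbabilityMeasure μ] (δ : ℝ)
    (h : ∀ (Ξ : ℕ) (η : ℝ), 0 < η → ∃ ρ : Measure UnitAddCircle, ρ ≤ μ ∧ δ ≤ ρ.real Set.univ ∧
      ∀ ξ : ℤ, ξ ≠ 0 → ξ.natAbs ≤ Ξ → ‖∫ x, (fourier ξ x : ℂ) ∂ρ‖ ≤ η)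
    (f : C(UnitAddCircle, ℝ)) (hf : ∀ x, 0 ≤ f x) :
    δ * ∫ x, f x ≤ ∫ x, f x ∂μ := by
  refine le_of_forall_pos_le_add fun η₀ hη₀ => ?_
  set η := η₀ / 3 with hη
  have hη0 : 0 < η := by positivity
  set fC : C(UnitAddCircle, ℂ) := ⟨fun x => (f x : ℂ), by fun_prop⟩ with hfC
  have hmem : fC ∈ closure (Submodule.span ℂ (Set.range (@fourier 1)) : Set C(UnitAddCircle, ℂ)) := by
    rw [← Submodule.topologicalClosure_coe, span_fourier_closure_eq_top]; trivial
  obtain ⟨P, hP, hdist⟩ := Metric.mem_closure_iff.1 hmem η hη0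
  obtain ⟨c, hc⟩ := Finsupp.mem_span_range_iff_exists_finsupp.1 hP
  set C := ∑ ξ ∈ c.support, ‖c ξ‖ + 1 with hC
  have hsum0 : 0 ≤ ∑ ξ ∈ c.support, ‖c ξ‖ := Finset.sum_nonneg fun _ _ => norm_nonneg _
  have hC0 : 0 < C := by linarith
  obtain ⟨ρ, hρμ, hδ, hρ⟩ := h (c.support.sup Int.natAbs) (η / C) (by positivity)
  have hfin : IsFiniteMeasure ρ := isFiniteMeasure_of_le μ hρμ
  set R := ρ.real Set.univ with hR
  have hR0 : 0 ≤ R := measureReal_nonneg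
  have hR1 : R ≤ 1 := by
    have h1 : ρ Set.univ ≤ μ Set.univ := hρμ _
    rw [measure_univ (μ := μ)] at h1
    exact ENNReal.toReal_le_of_le_ofReal zero_le_one (by rw [ENNReal.ofReal_one]; exact h1)
  have hPx : ∀ x, P x = ∑ ξ ∈ c.support, c ξ * (fourier ξ x : ℂ) := by
    intro x
    rw [← hc, Finsupp.sum, ContinuousMap.sum_apply]
    rfl
  have hintP : ∀ m : Measure UnitAddCircle, IsFiniteMeasure m →
      ∫ x, P x ∂m = ∑ ξ ∈ c.support, c ξ * ∫ x, (fourier ξ x : ℂ) ∂m := by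
    intro m _
    simp_rw [hPx]
    rw [integral_finsetSum _ fun ξ _ => integrable_cont (by fun_prop)]
    simp_rw [integral_const_mul]
  have hdiff : ∀ m : Measure UnitAddCircle, IsFiniteMeasure m →
      ‖∫ x, fC x ∂m - ∫ x, P x ∂m‖ ≤ η * m.real Set.univ := by
    intro m _
    rw [← integral_sub (integrable_cont (by fun_prop)) (integrable_cont (by fun_prop))]
    refine norm_integral_le_of_norm_le_const (Filter.Eventually.of_forall fun x => ?_)
    rw [← dist_eq_norm]
    exact (ContinuousMap.dist_apply_le_dist x).trans hdist.le
  have h1 : ‖∫ x, P x ∂ρ - R * ∫ x, P x‖ ≤ η := by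
    rw [hintP ρ hfin, hintP volume inferInstance, Finset.mul_sum, ← Finset.sum_sub_distrib]
    refine (norm_sum_le _ _).trans ?_
    have : ∀ ξ ∈ c.support, ‖c ξ * ∫ x, (fourier ξ x : ℂ) ∂ρ
        - R * (c ξ * ∫ x : UnitAddCircle, (fourier ξ x : ℂ))‖ ≤ ‖c ξ‖ * (η / C) := by
      intro ξ hξ
      by_cases h0 : ξ = 0
      · subst h0
        have ev : ∫ x : UnitAddCircle, (fourier 0 x : ℂ) = 1 := by
          simp
        have er : ∫ x : UnitAddCircle, (fourier 0 x : ℂ) ∂ρ = R := by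
          simp [← hR]
        rw [ev, er, mul_one, mul_comm, sub_self, norm_zero]
        positivity
      · rw [integral_fourier_vol ξ h0, mul_zero, mul_zero, sub_zero, norm_mul]
        gcongr
        exact hρ ξ h0 (Finset.le_sup (f := Int.natAbs) hξ)
    refine (Finset.sum_le_sum this).trans ?_
    rw [← Finset.sum_mul, mul_div_assoc', div_le_iff₀ hC0, mul_comm]
    gcongr
    linarith
  have h2 := hdiff ρ hfin
  have h3 := hdiff volume inferInstance
  have hv : (volume : Measure UnitAddCircle).real Set.univ = 1 := probReal_univ
  rw [hv] at h3
  have e1 : ∀ m : Measure UnitAddCircle, ∫ x, fC x ∂m = ((∫ x, f x ∂m : ℝ) : ℂ) := by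
    intro m; rw [← integral_complex_ofReal]; rfl
  have h4 : ‖∫ x, fC x ∂ρ - R * ∫ x, fC x‖ ≤ 3 * η := by
    have : ∫ x, fC x ∂ρ - R * ∫ x, fC x = (∫ x, fC x ∂ρ - ∫ x, P x ∂ρ)
        + (∫ x, P x ∂ρ - R * ∫ x, P x) - R * ((∫ x, fC x) - ∫ x, P x) := by ring
    rw [this]
    refine (norm_sub_le _ _).trans ?_
    refine (add_le_add_left (norm_add_le _ _) _).trans ?_
    rw [norm_mul, Complex.norm_real, Real.norm_of_nonneg hR0]
    have : R * ‖(∫ x, fC x) - ∫ x, P x‖ ≤ 1 * (η * 1) := by gcongr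
    have h6 : η * R ≤ η * 1 := by gcongr
    rw [← hR] at h2
    linarith
  rw [e1, e1, ← Complex.ofReal_mul, ← Complex.ofReal_sub, Complex.norm_real, Real.norm_eq_abs] at h4
  have h5 := (abs_le.1 h4).1
  have h6 : ∫ x, f x ∂ρ ≤ ∫ x, f x ∂μ :=
    integral_mono_measure hρμ (Filter.Eventually.of_forall hf) (integrable_cont (by fun_prop))
  have h7 : δ * ∫ x, f x ≤ R * ∫ x, f x :=
    mul_le_mul_of_nonneg_right hδ (integral_nonneg hf)
  have : 3 * η = η₀ := by rw [hη]; ring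
  linarith

lemma closed_ge (μ : Measure UnitAddCircle) [IsProbabilityMeasure μ] (δ : ℝ) (hδ : 0 ≤ δ)
    (h : ∀ f : C(UnitAddCircle, ℝ), (∀ x, 0 ≤ f x) → δ * ∫ x, f x ≤ ∫ x, f x ∂μ)
    (F : Set UnitAddCircle) (hF : IsClosed F) :
    ENNReal.ofReal δ * volume F ≤ μ F := by
  have t1 := ENNReal.Tendsto.const_mul (a := ENNReal.ofReal δ)
    (HasOuterApproxClosed.tendsto_lintegral_apprSeq hF (volume : Measure UnitAddCircle))
    (Or.inr ofReal_ne_top)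
  have t2 := HasOuterApproxClosed.tendsto_lintegral_apprSeq hF μ
  refine le_of_tendsto_of_tendsto' t1 t2 fun n => ?_
  set g := hF.apprSeq n
  set f : C(UnitAddCircle, ℝ) := ⟨fun x => (g x : ℝ), by fun_prop⟩
  have e : ∀ m : Measure UnitAddCircle, IsFiniteMeasure m →
      ∫⁻ x, g x ∂m = ENNReal.ofReal (∫ x, f x ∂m) := by
    intro m _
    rw [ofReal_integral_eq_lintegral_ofReal (f := fun x => f x) (integrable_cont (by fun_prop))
      (Filter.Eventually.of_forall fun x => (g x).2)]
    congr 1; funext x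
    exact (ENNReal.ofReal_coe_nnreal).symm
  rw [e μ inferInstance, e volume inferInstance, ← ENNReal.ofReal_mul hδ]
  exact ENNReal.ofReal_le_ofReal (h f fun x => (g x).2)

lemma conclude (n m : ℕ) (hn : 2 ≤ n) (hm : 2 ≤ m)
    (μ : Measure UnitAddCircle) [IsProbabilityMeasure μ]
    (hinvn : Measure.map (fun x : UnitAddCircle => n • x) μ = μ)
    (hinvm : Measure.map (fun x : UnitAddCircle => m • x) μ = μ)
    (herg : ∀ A : Set UnitAddCircle, MeasurableSet A →
      (fun x : UnitAddCircle => n • x) ⁻¹' A = A →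
      (fun x : UnitAddCircle => m • x) ⁻¹' A = A → μ A = 0 ∨ μ A = 1)
    (δ : ℝ) (hδ : 0 < δ)
    (h : ∀ F : Set UnitAddCircle, IsClosed F → ENNReal.ofReal δ * volume F ≤ μ F) :
    μ = volume := by
  have evol : ∀ k : ℕ, 2 ≤ k → Ergodic (fun x : UnitAddCircle => k • x) volume := fun k hk =>
    AddCircle.ergodic_nsmul (by omega)
  have mpn : MeasurePreserving (fun x : UnitAddCircle => n • x) μ μ := ⟨measurable_mT n, hinvn⟩
  have mpm : MeasurePreserving (fun x : UnitAddCircle => m • x) μ μ := ⟨measurable_mT m, hinvm⟩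
  have hpow : ∀ (ρ : Measure UnitAddCircle) (q : ℕ), ρ.map (mT q) = ρ → ∀ k, ρ.map (mT (q ^ k)) = ρ := by
    intro ρ q hq k
    induction k with
    | zero =>
      have : mT (q ^ 0) = id := by funext x; simp [mT]
      rw [this, Measure.map_id]
    | succ k ih => rw [pow_succ, ← map_mT_mT, ih, hq]
  have hvn : (volume : Measure UnitAddCircle).map (mT n) = volume := (evol n hn).toMeasurePreserving.map_eq
  have hvm : (volume : Measure UnitAddCircle).map (mT m) = volume := (evol m hm).toMeasurePreserving.map_eq
  have hv : ∀ i j, (volume : Measure UnitAddCircle).map (mT (n ^ i * m ^ j)) = volume := by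
    intro i j; rw [← map_mT_mT, hpow _ n hvn, hpow _ m hvm]
  have hμ : ∀ i j, μ.map (mT (n ^ i * m ^ j)) = μ := by
    intro i j; rw [← map_mT_mT, hpow _ n hinvn, hpow _ m hinvm]
  have hac : μ ≪ volume := by
    refine Measure.AbsolutelyContinuous.mk fun N hN hN0 => ?_
    set B : Set UnitAddCircle := ⋃ i : ℕ, ⋃ j : ℕ, mT (n ^ i * m ^ j) ⁻¹' N with hB
    have hBm : MeasurableSet B := MeasurableSet.iUnion fun i => MeasurableSet.iUnion fun j =>
      measurable_mT _ hN
    have hB0 : volume B = 0 := by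
      rw [hB, measure_iUnion_null_iff]; intro i
      rw [measure_iUnion_null_iff]; intro j
      rw [← Measure.map_apply (measurable_mT _) hN, hv i j, hN0]
    have memB : ∀ x, x ∈ B ↔ ∃ i j : ℕ, (n ^ i * m ^ j) • x ∈ N := by
      intro x; simp [hB, mT]
    have hBn : ∀ x, n • x ∈ B → x ∈ B := by
      intro x hx
      obtain ⟨i, j, hij⟩ := (memB _).1 hx
      refine (memB _).2 ⟨i + 1, j, ?_⟩
      rwa [← mul_nsmul', show n ^ i * m ^ j * n = n ^ (i + 1) * m ^ j by ring] at hij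
    have hBmm : ∀ x, m • x ∈ B → x ∈ B := by
      intro x hx
      obtain ⟨i, j, hij⟩ := (memB _).1 hx
      refine (memB _).2 ⟨i, j + 1, ?_⟩
      rwa [← mul_nsmul', show n ^ i * m ^ j * m = n ^ i * m ^ (j + 1) by ring] at hij
    set B' : Set UnitAddCircle := ⋂ k : ℕ, mT (n ^ k * m ^ k) ⁻¹' B with hB'
    have hB'm : MeasurableSet B' := MeasurableSet.iInter fun k => measurable_mT _ hBm
    have memB' : ∀ x, x ∈ B' ↔ ∀ k : ℕ, (n ^ k * m ^ k) • x ∈ B := by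
      intro x; simp [hB', mT]
    have hB'B : B' ⊆ B := by
      intro x hx
      have := (memB' x).1 hx 0
      simpa using this
    have hinv : ∀ q q' : ℕ, n * m = q * q' → (∀ x, q • x ∈ B → x ∈ B) → (∀ x, q' • x ∈ B → x ∈ B) →
        (fun x : UnitAddCircle => q • x) ⁻¹' B' = B' := by
      intro q q' hqq h1 h2
      ext x
      rw [Set.mem_preimage, memB', memB']
      constructor
      · intro hx k
        refine h1 _ ?_
        rw [smul_comm]
        exact hx k
      · intro hx k
        have := hx (k + 1)
        have e : n ^ (k + 1) * m ^ (k + 1) = q' * (n ^ k * m ^ k * q) := by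
          calc n ^ (k + 1) * m ^ (k + 1) = n ^ k * m ^ k * (n * m) := by ring
            _ = _ := by rw [hqq]; ring
        rw [e, mul_nsmul'] at this
        have := h2 _ this
        rwa [mul_nsmul'] at this
    have hmono : ∀ k, μ (mT (n ^ k * m ^ k) ⁻¹' B) = μ B := by
      intro k
      rw [← Measure.map_apply (measurable_mT _) hBm, hμ]
    have hB'μ : μ B' = μ B := by
      have hae : ∀ k, (mT (n ^ k * m ^ k) ⁻¹' B : Set UnitAddCircle) =ᵐ[μ] B := by
        intro k
        refine ae_eq_of_subset_of_measure_ge ?_ (hmono k).ge (measurable_mT _ hBm).nullMeasurableSet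
          (measure_ne_top _ _)
        intro x hx
        have hx : (n ^ k * m ^ k) • x ∈ B := hx
        obtain ⟨i, j, hij⟩ := (memB _).1 hx
        refine (memB _).2 ⟨i + k, j + k, ?_⟩
        rwa [← mul_nsmul', show n ^ i * m ^ j * (n ^ k * m ^ k) = n ^ (i + k) * m ^ (j + k) by ring] at hij
      have : B' =ᵐ[μ] (⋂ _ : ℕ, B : Set UnitAddCircle) := Filter.EventuallyEq.countable_iInter hae
      rw [measure_congr this, Set.iInter_const]
    have hNB : N ⊆ B := fun x hx => (memB x).2 ⟨0, 0, by simpa using hx⟩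
    rcases herg B' hB'm (hinv n m rfl hBn hBmm) (hinv m n (mul_comm _ _) hBmm hBn) with h0 | h1
    · exact measure_mono_null hNB (hB'μ ▸ h0)
    · exfalso
      have hvc : volume B'ᶜ = 1 := by
        rw [prob_compl_eq_one_iff hB'm]
        exact measure_mono_null hB'B hB0
      obtain ⟨F, hFs, hFc, hF⟩ := hB'm.compl.exists_lt_isCompact (μ := volume) (r := 0) (by rw [hvc]; exact one_pos)
      have h2 := h F hFc.isClosed
      have h3 : μ F = 0 := measure_mono_null hFs ((prob_compl_eq_zero_iff hB'm).2 h1)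
      rw [h3] at h2
      have : 0 < ENNReal.ofReal δ * volume F := ENNReal.mul_pos (by simpa using hδ) hF.ne'
      exact absurd h2 (not_le.2 this)
  exact (evol n hn).eq_of_absolutelyContinuous mpn hac

end RJ


namespace RJ

lemma split_coprime (w : ℕ) : ∀ n : ℕ, 0 < n →
    ∃ Q n' k : ℕ, n = Q * n' ∧ Q.Coprime w ∧ n' ∣ w ^ k := by
  intro n
  induction n using Nat.strong_induction_on with
  | _ n ih =>
    intro hn
    by_cases h : n.Coprime w
    · exact ⟨n, 1, 0, by simp, h, by simp⟩
    · set g := n.gcd w with hg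
      have hg0 : 0 < g := Nat.gcd_pos_of_pos_left _ hn
      have hg1 : g ≠ 1 := h
      obtain ⟨n1, hn1⟩ : g ∣ n := Nat.gcd_dvd_left _ _
      have hn10 : 0 < n1 := by
        rcases Nat.eq_zero_or_pos n1 with h0 | h0
        · subst h0; omega
        · exact h0
      have hlt : n1 < n := by
        rw [hn1]; exact (Nat.lt_mul_iff_one_lt_left hn10).2 (by omega)
      obtain ⟨Q, n', k, h1, h2, h3⟩ := ih n1 hlt hn10
      refine ⟨Q, g * n', k + 1, ?_, h2, ?_⟩
      · rw [hn1, h1]; ring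
      · rw [pow_succ, mul_comm]; exact mul_dvd_mul h3 (Nat.gcd_dvd_right _ _)

lemma prime_dvd_div_gcd (a b q : ℕ) (ha : 0 < a) (hb : 0 < b) (hq : q.Prime) :
    q ∣ a / a.gcd b ↔ b.factorization q < a.factorization q := by
  have hg : a.gcd b ∣ a := Nat.gcd_dvd_left _ _
  have hne : a / a.gcd b ≠ 0 := (Nat.div_pos (Nat.le_of_dvd ha hg) (Nat.gcd_pos_of_pos_left _ ha)).ne'
  rw [hq.dvd_iff_one_le_factorization hne, Nat.factorization_div hg,
    Nat.factorization_gcd ha.ne' hb.ne']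
  simp only [Finsupp.tsub_apply, Finsupp.inf_apply]
  rcases le_total (a.factorization q) (b.factorization q) with h | h
  · rw [inf_eq_left.2 h]; omega
  · rw [inf_eq_right.2 h]; omega

lemma triv_one (ν : Measure UnitAddCircle) [IsProbabilityMeasure ν] : Triv 1 ν := by
  have : sig 1 ν = ν := by simp [sig]
  unfold Triv jac
  rw [this]
  exact Measure.rnDeriv_self ν

lemma map_pow_eq (μ : Measure UnitAddCircle) (q : ℕ) (hq : μ.map (mT q) = μ) (k : ℕ) :
    μ.map (mT (q ^ k)) = μ := by
  induction k with
  | zero =>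
    have : mT (q ^ 0) = id := by funext x; simp [mT]
    rw [this, Measure.map_id]
  | succ k ih => rw [pow_succ, ← map_mT_mT, ih, hq]

lemma pow_ne_pow_of_irrational (n m : ℕ) (hn : 2 ≤ n) (hm : 2 ≤ m)
    (hindep : Irrational (Real.log n / Real.log m)) (i j : ℕ) (hj : 0 < j) : m ^ j ≠ n ^ i := by
  intro h
  have hi : i ≠ 0 := by
    rintro rfl
    rw [pow_zero] at h
    have := (Nat.pow_eq_one).1 h
    omega
  have h1 : (j : ℝ) * Real.log m = i * Real.log n := by
    have : (m : ℝ) ^ j = (n : ℝ) ^ i := by exact_mod_cast h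
    have := congrArg Real.log this
    rwa [Real.log_pow, Real.log_pow] at this
  have hlm : Real.log m ≠ 0 := (Real.log_pos (by exact_mod_cast hm)).ne'
  apply hindep
  refine ⟨(j : ℚ) / i, ?_⟩
  push_cast
  have : (i : ℝ) ≠ 0 := by exact_mod_cast hi
  rw [div_eq_div_iff this hlm, h1]; ring

lemma selection (n m : ℕ) (hn : 2 ≤ n) (hm : 2 ≤ m)
    (hindep : Irrational (Real.log n / Real.log m))
    (μ : Measure UnitAddCircle) [IsProbabilityMeasure μ]
    (hinvn : μ.map (mT n) = μ) (hinvm : μ.map (mT m) = μ) (hnt : ¬ Triv n μ) :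
    ∃ K G α β : ℕ, 2 ≤ K ∧ α.Coprime K ∧ β.Coprime K ∧ α ≠ β ∧ μ.map (mT (G * α)) = μ ∧
      μ.map (mT (G * β)) = μ ∧ ∃ c : ℝ, 0 < c ∧ c ≤ 1 ∧
      ∀ S j : ℕ, kap K (μ.map (mT (G ^ S * K ^ j))) ≤ ENNReal.ofReal (1 - c) := by
  classical
  set T : ℕ → Measure UnitAddCircle := fun u => μ.map (mT u) with hT
  have hTp : ∀ u, IsProbabilityMeasure (T u) := fun u => by rw [hT]; infer_instance
  have hTT : ∀ u v, (T u).map (mT v) = T (u * v) := fun u v => map_mT_mT u v μ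
  have hTinv : ∀ x y, T x = μ → T (x * y) = T y := by
    intro x y h; rw [← hTT, h]
  have hT1 : T 1 = μ := by
    have : mT 1 = id := by funext x; simp [mT]
    simp only [hT]; rw [this, Measure.map_id]
  set Sup : ℕ → Prop := fun u => 0 < u ∧ ∃ k, u ∣ (n * m) ^ k with hSup
  have hnm : 0 < n * m := Nat.mul_pos (by omega) (by omega)
  have sup_mul : ∀ u v, Sup u → Sup v → Sup (u * v) := by
    rintro u v ⟨h1, k1, h2⟩ ⟨h3, k2, h4⟩
    exact ⟨Nat.mul_pos h1 h3, k1 + k2, by rw [pow_add]; exact mul_dvd_mul h2 h4⟩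
  have sup_dvd : ∀ u v, u ∣ v → Sup v → Sup u := by
    rintro u v h ⟨h1, k, h2⟩
    exact ⟨Nat.pos_of_dvd_of_pos h h1, k, h.trans h2⟩
  have sup_one : Sup 1 := ⟨one_pos, 0, by simp⟩
  have sup_pow : ∀ u k, Sup u → Sup (u ^ k) := by
    intro u k hu
    induction k with
    | zero => simpa using sup_one
    | succ k ih => rw [pow_succ]; exact sup_mul _ _ ih hu
  have sup_n : Sup n := ⟨by omega, 1, by rw [pow_one]; exact dvd_mul_right _ _⟩
  have sup_m : Sup m := ⟨by omega, 1, by rw [pow_one]; exact dvd_mul_left _ _⟩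
  set TA : ℕ → Prop := fun d => ∀ u, Sup u → Triv d (T u) with hTA
  have ta_one : TA 1 := fun u _ => triv_one _
  have ta_mul : ∀ d e, Sup d → Sup e → TA d → TA e → TA (d * e) := by
    intro d e hd he h1 h2 u hu
    rw [triv_mul_iff d e hd.1 he.1, hTT]
    exact ⟨h1 u hu, h2 _ (sup_mul _ _ hu hd)⟩
  have ta_of_primes : ∀ d, Sup d → (∀ q, q.Prime → q ∣ d → TA q) → TA d := by
    intro d
    induction d using Nat.recOnMul with
    | zero => intro h; exact absurd h.1 (by omega)
    | one => intro _ _; exact ta_one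
    | prime p hp => intro _ h; exact h p hp dvd_rfl
    | mul a b iha ihb =>
      intro hs h
      have sa := sup_dvd a _ (dvd_mul_right a b) hs
      have sb := sup_dvd b _ (dvd_mul_left b a) hs
      exact ta_mul a b sa sb (iha sa fun q hq hqa => h q hq (hqa.mul_right _))
        (ihb sb fun q hq hqb => h q hq (hqb.mul_left _))
  have ta_pow : ∀ d k, Sup d → TA d → TA (d ^ k) := by
    intro d k hd h
    induction k with
    | zero => simpa using ta_one
    | succ k ih => rw [pow_succ]; exact ta_mul _ _ (sup_pow d k hd) hd ih h
  have kapd : ∀ K d x, Sup K → Sup d → Sup x → TA d → kap K (T (x * d)) = kap K (T x) := by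
    intro K d x hK hd hx h
    have := kap_triv K d hK.1 hd.1 (T x) (h x hx) (by rw [hTT]; exact h _ (sup_mul _ _ hx hK))
    rwa [hTT] at this
  -- choice of p
  set NTs := n.primeFactors.filter (fun q => ¬ TA q) with hNTs
  have hne : NTs.Nonempty := by
    by_contra hcon
    rw [Finset.not_nonempty_iff_eq_empty] at hcon
    apply hnt
    have : TA n := ta_of_primes n sup_n (by
      intro q hq hqn
      by_contra hq'
      have : q ∈ NTs := Finset.mem_filter.2 ⟨Nat.mem_primeFactors.2 ⟨hq, hqn, by omega⟩, hq'⟩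
      rw [hcon] at this
      exact absurd this (Finset.notMem_empty _))
    have := this 1 sup_one
    rwa [hT1] at this
  obtain ⟨p, hpN, hpmin⟩ := Finset.exists_min_image NTs
    (fun q => (m.factorization q : ℚ) / n.factorization q) hne
  obtain ⟨hpf, hpNT⟩ := Finset.mem_filter.1 hpN
  obtain ⟨hp, hpn, -⟩ := Nat.mem_primeFactors.1 hpf
  set i0 := m.factorization p with hi0
  set j0 := n.factorization p with hj0
  have hj0pos : 0 < j0 := hp.factorization_pos_of_dvd (by omega) hpn
  have hmin : ∀ q, q.Prime → q ∣ n → ¬ TA q → i0 * n.factorization q ≤ j0 * m.factorization q := by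
    intro q hq hqn hqT
    have h1 := hpmin q (Finset.mem_filter.2 ⟨Nat.mem_primeFactors.2 ⟨hq, hqn, by omega⟩, hqT⟩)
    have hq0 : 0 < n.factorization q := hq.factorization_pos_of_dvd (by omega) hqn
    have a1 : (0 : ℚ) < j0 := by exact_mod_cast hj0pos
    have a2 : (0 : ℚ) < n.factorization q := by exact_mod_cast hq0
    rw [div_le_div_iff₀ a1 a2] at h1
    have : i0 * n.factorization q ≤ m.factorization q * j0 := by exact_mod_cast h1
    rwa [mul_comm j0]
  set a := m ^ j0 with ha
  set b := n ^ i0 with hb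
  have ha0 : 0 < a := pow_pos (by omega) _
  have hb0 : 0 < b := pow_pos (by omega) _
  have va : ∀ q, a.factorization q = j0 * m.factorization q := by
    intro q; rw [ha, Nat.factorization_pow]; simp
  have vb : ∀ q, b.factorization q = i0 * n.factorization q := by
    intro q; rw [hb, Nat.factorization_pow]; simp
  set G := a.gcd b with hG
  have hG0 : 0 < G := Nat.gcd_pos_of_pos_left _ ha0
  set α := a / G with hα
  set β := b / G with hβ
  have haG : G * α = a := Nat.mul_div_cancel' (Nat.gcd_dvd_left _ _)
  have hbG : G * β = b := Nat.mul_div_cancel' (Nat.gcd_dvd_right _ _)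
  have hαd : ∀ q, q.Prime → (q ∣ α ↔ i0 * n.factorization q < j0 * m.factorization q) := by
    intro q hq
    rw [hα, hG, prime_dvd_div_gcd a b q ha0 hb0 hq, va, vb]
  have hβd : ∀ q, q.Prime → (q ∣ β ↔ j0 * m.factorization q < i0 * n.factorization q) := by
    intro q hq
    rw [hβ, hG, Nat.gcd_comm, prime_dvd_div_gcd b a q hb0 ha0 hq, va, vb]
  have hαβ : α ≠ β := by
    intro h
    apply pow_ne_pow_of_irrational n m hn hm hindep i0 j0 hj0pos
    rw [← ha, ← hb, ← haG, ← hbG, h]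
  have sup_a : Sup a := sup_pow _ _ sup_m
  have sup_b : Sup b := sup_pow _ _ sup_n
  have sup_α : Sup α := sup_dvd _ _ (Dvd.intro_left _ haG) sup_a
  have sup_β : Sup β := sup_dvd _ _ (Dvd.intro_left _ hbG) sup_b
  have sup_G : Sup G := sup_dvd _ _ (Dvd.intro _ haG) sup_a
  have hTa : T a = μ := map_pow_eq μ m hinvm j0
  have hTb : T b = μ := map_pow_eq μ n hinvn i0
  have taβ : TA β := by
    refine ta_of_primes β sup_β fun q hq hqβ => ?_
    have h1 := (hβd q hq).1 hqβ
    by_contra hcon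
    have hqn : q ∣ n := by
      by_contra h
      rw [Nat.factorization_eq_zero_of_not_dvd h] at h1
      omega
    have := hmin q hq hqn hcon
    omega
  have hTαβ : ∀ E x, T (x * α ^ E) = T (x * β ^ E) := by
    intro E
    induction E with
    | zero => intro x; simp
    | succ E ih =>
      intro x
      have h1 : ∀ y, T (y * α) = T (y * β) := by
        intro y
        rw [← hTinv b (y * α) hTb, ← hTinv a (y * β) hTa, ← haG, ← hbG]
        congr 1; ring
      rw [pow_succ, ← mul_assoc, h1, mul_assoc, mul_comm (α ^ E), ← mul_assoc, ih]
      congr 1; ring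
  obtain ⟨Q, n', k, hnQ, hQco, hn'⟩ := split_coprime (α * β) n (by omega)
  have hQα : α.Coprime Q := (Nat.Coprime.coprime_mul_right_right hQco).symm
  have hQβ : β.Coprime Q := (Nat.Coprime.coprime_mul_left_right hQco).symm
  have hn'Q : n'.Coprime Q :=
    Nat.Coprime.coprime_dvd_left hn' (Nat.Coprime.pow_left _ hQco.symm)
  have sup_Q : Sup Q := sup_dvd _ _ (Dvd.intro _ hnQ.symm) sup_n
  have sup_n' : Sup n' := sup_dvd _ _ (Dvd.intro_left _ hnQ.symm) sup_n
  have hpQ : p ∣ Q := by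
    have h1 : p ∣ Q * n' := hnQ ▸ hpn
    rcases hp.dvd_mul.1 h1 with h | h
    · exact h
    · exfalso
      have := hp.dvd_of_dvd_pow (h.trans hn')
      have e : i0 * n.factorization p = j0 * m.factorization p := by rw [← hi0, ← hj0, mul_comm]
      rcases hp.dvd_mul.1 this with h | h
      · have := (hαd p hp).1 h; omega
      · have := (hβd p hp).1 h; omega
  -- u0
  obtain ⟨u0, hu0, hu0T⟩ : ∃ u0, Sup u0 ∧ ¬ Triv p (T u0) := by
    by_contra hcon
    push Not at hcon
    exact hpNT hcon
  obtain ⟨u', uC, f, hu, hu'co, huC⟩ := split_coprime Q u0 hu0.1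
  have sup_u' : Sup u' := sup_dvd _ _ (Dvd.intro _ hu.symm) hu0
  have sup_uC : Sup uC := sup_dvd _ _ (Dvd.intro_left _ hu.symm) hu0
  set K := Q ^ (f + 1) with hK
  have sup_K : Sup K := sup_pow _ _ sup_Q
  have hpK : p ∣ K := hpQ.trans (dvd_pow_self Q (by omega))
  have hK2 : 2 ≤ K := hp.two_le.trans (Nat.le_of_dvd sup_K.1 hpK)
  have hKT : ¬ Triv K (T u') := by
    intro h
    have h1 : uC * p ∣ K := by rw [hK, pow_succ]; exact mul_dvd_mul huC hpQ
    obtain ⟨t, ht⟩ := h1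
    have ht0 : 0 < t := by
      rcases Nat.eq_zero_or_pos t with h0 | h0
      · subst h0; omega
      · exact h0
    rw [ht, mul_assoc, triv_mul_iff uC (p * t) sup_uC.1 (Nat.mul_pos hp.pos ht0),
      triv_mul_iff p t hp.pos ht0, hTT, ← hu] at h
    exact hu0T h.2.1
  have hkle := kap_le K sup_K.1 (T u')
  have hklt : kap K (T u') < 1 := lt_of_le_of_ne hkle fun h => hKT (triv_of_kap K sup_K.1 _ h)
  refine ⟨K, G, α, β, hK2, Nat.Coprime.pow_right _ hQα, Nat.Coprime.pow_right _ hQβ, hαβ,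
    by rw [haG]; exact hTa, by rw [hbG]; exact hTb, 1 - (kap K (T u')).toReal, ?_, ?_, ?_⟩
  · have : (kap K (T u')).toReal < 1 := by
      rw [← ENNReal.toReal_one]
      exact (ENNReal.toReal_lt_toReal (hklt.trans one_lt_top).ne one_ne_top).2 hklt
    linarith
  · have : 0 ≤ (kap K (T u')).toReal := ENNReal.toReal_nonneg
    linarith
  intro S j
  rw [show (1:ℝ) - (1 - (kap K (T u')).toReal) = (kap K (T u')).toReal by ring,
    ENNReal.ofReal_toReal (hklt.trans one_lt_top).ne]
  change kap K (T (G ^ S * K ^ j)) ≤ _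
  have s1 : Sup (G ^ S * K ^ j) := sup_mul _ _ (sup_pow _ _ sup_G) (sup_pow _ _ sup_K)
  have c1 : kap K (T (G ^ S * K ^ j)) = kap K (T (K ^ j)) := by
    rw [← kapd K (β ^ S) _ sup_K (sup_pow _ _ sup_β) s1 (ta_pow _ _ sup_β taβ)]
    rw [show G ^ S * K ^ j * β ^ S = (G * β) ^ S * K ^ j by rw [mul_pow]; ring, hbG,
      hTinv _ _ (map_pow_eq μ b hTb S)]
  rw [c1]
  have hcase : ∀ q, q.Prime → Sup q → q.Coprime Q → ¬ TA q → q ∣ α := by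
    intro q hq hqs hqQ hqT
    obtain ⟨-, k', hk'⟩ := hqs
    have hqnm := hq.dvd_of_dvd_pow hk'
    by_cases hqn : q ∣ n
    · have h1 : q ∣ Q * n' := hnQ ▸ hqn
      rcases hq.dvd_mul.1 h1 with h | h
      · exfalso
        exact hq.one_lt.ne' (Nat.Coprime.eq_one_of_dvd hqQ h)
      · have := hq.dvd_of_dvd_pow (h.trans hn')
        rcases hq.dvd_mul.1 this with h | h
        · exact h
        · exfalso
          have h2 := (hβd q hq).1 h
          have h3 := hmin q hq hqn hqT
          omega
    · have hqm : q ∣ m := (hq.dvd_mul.1 hqnm).resolve_left hqn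
      rw [hαd q hq, Nat.factorization_eq_zero_of_not_dvd hqn, mul_zero]
      exact Nat.mul_pos hj0pos (hq.factorization_pos_of_dvd (by omega) hqm)
  have hEd : ∀ w, Sup w → w.Coprime Q → ∃ E d, w ∣ α ^ E * d ∧ Sup d ∧ TA d ∧ d.Coprime Q := by
    intro w
    induction w using Nat.recOnMul with
    | zero => intro h; exact absurd h.1 (by omega)
    | one => intro _ _; exact ⟨0, 1, by simp, sup_one, ta_one, Nat.coprime_one_left _⟩
    | prime q hq =>
      intro hs hc
      by_cases hqT : TA q
      · exact ⟨0, q, by simp, hs, hqT, hc⟩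
      · exact ⟨1, 1, by simpa using hcase q hq hs hc hqT, sup_one, ta_one, Nat.coprime_one_left _⟩
    | mul x y ihx ihy =>
      intro hs hc
      obtain ⟨E1, d1, a1, a2, a3, a4⟩ := ihx (sup_dvd x _ (dvd_mul_right x y) hs)
        (Nat.Coprime.coprime_mul_right hc)
      obtain ⟨E2, d2, b1, b2, b3, b4⟩ := ihy (sup_dvd y _ (dvd_mul_left y x) hs)
        (Nat.Coprime.coprime_mul_left hc)
      refine ⟨E1 + E2, d1 * d2, ?_, sup_mul _ _ a2 b2, ta_mul _ _ a2 b2 a3 b3,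
        Nat.Coprime.mul_left a4 b4⟩
      rw [pow_add, show α ^ E1 * α ^ E2 * (d1 * d2) = (α ^ E1 * d1) * (α ^ E2 * d2) by ring]
      exact mul_dvd_mul a1 b1
  obtain ⟨E, d, ⟨e, he⟩, sd, td, cd⟩ := hEd (n' ^ ((f + 1) * j) * u')
    (sup_mul _ _ (sup_pow _ _ sup_n') sup_u')
    (Nat.Coprime.mul_left (Nat.Coprime.pow_left _ hn'Q) hu'co)
  have eco : e.Coprime K := by
    refine Nat.Coprime.pow_right _ ?_
    refine Nat.Coprime.coprime_dvd_left (Dvd.intro_left _ he.symm) ?_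
    exact Nat.Coprime.mul_left (Nat.Coprime.pow_left _ hQα) cd
  have sKj : Sup (K ^ j) := sup_pow _ _ sup_K
  calc kap K (T (K ^ j)) = kap K (T (K ^ j * d)) := (kapd K d _ sup_K sd sKj td).symm
    _ = kap K (T (K ^ j * d * β ^ E)) :=
      (kapd K (β ^ E) _ sup_K (sup_pow _ _ sup_β) (sup_mul _ _ sKj sd) (ta_pow _ _ sup_β taβ)).symm
    _ = kap K (T (K ^ j * d * α ^ E)) := by rw [hTαβ]
    _ = kap K (T (n ^ ((f + 1) * j) * (u' * e))) := by
      congr 2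
      rw [mul_assoc, mul_comm d, he, hK, ← pow_mul]
      conv_rhs => rw [hnQ, mul_pow]
      ring
    _ = kap K (T (u' * e)) := by rw [hTinv _ _ (map_pow_eq μ n hinvn _)]
    _ = kap K ((T u').map (mT e)) := by rw [hTT]
    _ ≤ kap K (T u') := kap_map_le K e sup_K.1 eco _

end RJ


namespace RJ

section Ent
variable {α : Type*} [MeasurableSpace α]

/-- Shannon entropy of a finite-valued map. -/
noncomputable def Ent (μ : Measure α) {ι : Type*} [Fintype ι] (X : α → ι) : ℝ :=
  ∑ i, Real.negMulLog (μ.real (X ⁻¹' {i}))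

lemma gibbs_term (a s q : ℝ) (ha : 0 ≤ a) (hs : a ≤ s) (hq : 0 < q) :
    Real.negMulLog a ≤ - a * Real.log s - a * Real.log q + (s * q - a) := by
  rcases ha.eq_or_lt with rfl | ha
  · simp; positivity
  have hs0 : 0 < s := ha.trans_le hs
  have h := Real.log_le_sub_one_of_pos (show 0 < s * q / a by positivity)
  rw [Real.log_div (by positivity) ha.ne', Real.log_mul hs0.ne' hq.ne'] at h
  have h2 := mul_le_mul_of_nonneg_left h ha.le
  have : a * (s * q / a - 1) = s * q - a := by field_simp
  rw [this] at h2
  unfold Real.negMulLog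
  linarith

lemma real_sum_fiber (μ : Measure α) [IsFiniteMeasure μ] {κ : Type*} [Fintype κ]
    [MeasurableSpace κ] [MeasurableSingletonClass κ] (W : α → κ) (hW : Measurable W)
    {S : Set α} (hS : MeasurableSet S) :
    ∑ w, μ.real (S ∩ W ⁻¹' {w}) = μ.real S := by
  rw [← measureReal_biUnion_finset]
  · congr 1; ext x; simp
  · intro i _ j _ hij
    refine Set.disjoint_left.2 ?_
    rintro x ⟨_, hx⟩ ⟨_, hy⟩
    exact hij (hx.symm.trans hy)
  · intro i _
    exact hS.inter (hW (measurableSet_singleton i))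

lemma negMulLog_sum_le {ι : Type*} (s : Finset ι) (a : ι → ℝ) (ha : ∀ i, 0 ≤ a i) :
    Real.negMulLog (∑ i ∈ s, a i) ≤ ∑ i ∈ s, Real.negMulLog (a i) := by
  have : Real.negMulLog (∑ i ∈ s, a i) = ∑ i ∈ s, - a i * Real.log (∑ i ∈ s, a i) := by
    rw [← Finset.sum_mul, Finset.sum_neg_distrib]; rfl
  rw [this]
  refine Finset.sum_le_sum fun i hi => ?_
  rcases (ha i).eq_or_lt with h | h
  · simp [← h]
  have hle : a i ≤ ∑ i ∈ s, a i := Finset.single_le_sum (fun j _ => ha j) hi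
  have := Real.log_le_log h hle
  have := mul_le_mul_of_nonneg_left this h.le
  unfold Real.negMulLog
  linarith

lemma Ent_comp_le (μ : Measure α) [IsFiniteMeasure μ] {ι κ : Type*} [Fintype ι] [Fintype κ]
    [MeasurableSpace ι] [MeasurableSingletonClass ι]
    (X : α → ι) (hX : Measurable X) (f : ι → κ) : Ent μ (f ∘ X) ≤ Ent μ X := by
  classical
  unfold Ent
  rw [← Finset.sum_fiberwise (g := f)]
  refine Finset.sum_le_sum fun k _ => ?_
  refine le_trans (le_of_eq ?_) (negMulLog_sum_le _ _ fun i => measureReal_nonneg)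
  congr 1
  rw [← measureReal_biUnion_finset]
  · congr 1; ext x; simp
  · intro i _ j _ hij
    refine Set.disjoint_left.2 ?_
    intro x hx hy
    exact hij (hx.symm.trans hy)
  · intro i _
    exact hX (measurableSet_singleton i)

lemma Ent_pair_le (μ : Measure α) [IsProbabilityMeasure μ] {ι κ : Type*} [Fintype ι] [Fintype κ]
    [MeasurableSpace ι] [MeasurableSingletonClass ι] [MeasurableSpace κ]
    [MeasurableSingletonClass κ]
    (X : α → ι) (hX : Measurable X) (W : α → κ) (hW : Measurable W) (φ : κ → ι)
    (ε δ : ℝ) (hε : 0 < ε) (hε1 : ε < 1)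
    (h : μ.real {x | X x ≠ φ (W x)} ≤ δ) :
    Ent μ (fun x => (X x, W x)) ≤ Ent μ W - Real.log (1 - ε)
      + δ * (Real.log (Fintype.card ι + 1) - Real.log ε) := by
  classical
  set N : ℝ := Fintype.card ι + 1 with hN
  have hN1 : 1 ≤ N := by rw [hN]; linarith [(Nat.cast_nonneg (Fintype.card ι) : (0:ℝ) ≤ _)]
  set a : ι → κ → ℝ := fun i w => μ.real ((X ⁻¹' {i}) ∩ W ⁻¹' {w}) with ha
  set s : κ → ℝ := fun w => μ.real (W ⁻¹' {w}) with hs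
  have hWm : ∀ w, MeasurableSet (W ⁻¹' {w}) := fun w => hW (measurableSet_singleton w)
  have hXm : ∀ w, MeasurableSet (X ⁻¹' {w}) := fun w => hX (measurableSet_singleton w)
  have hsum : ∀ w, ∑ i, a i w = s w := by
    intro w
    change _ = μ.real (W ⁻¹' {w})
    rw [← real_sum_fiber μ X hX (hWm w)]
    exact Finset.sum_congr rfl fun i _ => by rw [ha]; simp only [Set.inter_comm]
  have hs1 : ∑ w, s w = 1 := by
    have := real_sum_fiber μ W hW MeasurableSet.univ
    simpa [hs] using this
  have ha0 : ∀ i w, 0 ≤ a i w := fun i w => measureReal_nonneg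
  have hale : ∀ i w, a i w ≤ s w := fun i w => measureReal_mono Set.inter_subset_right
  have hmeas : MeasurableSet {x | X x = φ (W x)} := by
    have : {x | X x = φ (W x)} = ⋃ w, (X ⁻¹' {φ w} ∩ W ⁻¹' {w}) := by
      ext x; simp
    rw [this]
    exact MeasurableSet.iUnion fun w => (hXm _).inter (hWm w)
  have hgood : ∑ w, a (φ w) w = 1 - μ.real {x | X x ≠ φ (W x)} := by
    have h1 : μ.real {x | X x ≠ φ (W x)} = 1 - μ.real {x | X x = φ (W x)} := by
      rw [← probReal_compl_eq_one_sub hmeas]; rfl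
    rw [h1, _root_.sub_sub_cancel, ← real_sum_fiber μ W hW hmeas]
    refine Finset.sum_congr rfl fun w _ => ?_
    change μ.real _ = _
    congr 1; ext x; simp only [Set.mem_inter_iff, Set.mem_preimage, Set.mem_singleton_iff,
      Set.mem_setOf_eq]
    constructor
    · rintro ⟨h1, h2⟩; exact ⟨by rw [h1, h2], h2⟩
    · rintro ⟨h1, h2⟩; exact ⟨by rw [h1, h2], h2⟩
  have hE : Ent μ (fun x => (X x, W x)) = ∑ w, ∑ i, Real.negMulLog (a i w) := by
    unfold Ent
    rw [Fintype.sum_prod_type, Finset.sum_comm]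
    refine Finset.sum_congr rfl fun w _ => Finset.sum_congr rfl fun i _ => ?_
    rw [ha]; congr 2; ext x; simp
  set q : ι → ι → ℝ := fun j i => if i = j then 1 - ε else ε / N with hq
  have hq0 : ∀ j i, 0 < q j i := by
    intro j i; simp only [hq]; split_ifs
    · linarith
    · positivity
  have hqs : ∀ j, ∑ i, q j i ≤ 1 := by
    intro j
    rw [← Finset.add_sum_erase _ _ (Finset.mem_univ j)]
    have : ∑ i ∈ Finset.univ.erase j, q j i ≤ ∑ i : ι, ε / N := by
      refine (Finset.sum_le_sum (g := fun _ => ε / N) fun i hi => ?_).trans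
        (Finset.sum_le_sum_of_subset_of_nonneg (Finset.erase_subset _ _) fun _ _ _ => by positivity)
      simp [hq, (Finset.mem_erase.1 hi).1]
    have h2 : ∑ i : ι, ε / N ≤ ε := by
      rw [Finset.sum_const, Finset.card_univ, nsmul_eq_mul, ← mul_div_assoc, div_le_iff₀ (by positivity)]
      rw [hN]; nlinarith
    have : q j j = 1 - ε := by simp [hq]
    linarith
  have hstep : ∀ w, ∑ i, Real.negMulLog (a i w) ≤ Real.negMulLog (s w)
      - Real.log (1 - ε) * s w + (s w - a (φ w) w) * (Real.log N - Real.log ε) := by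
    intro w
    have h1 : ∑ i, Real.negMulLog (a i w) ≤
        ∑ i, (- a i w * Real.log (s w) - a i w * Real.log (q (φ w) i) + (s w * q (φ w) i - a i w)) :=
      Finset.sum_le_sum fun i _ => gibbs_term _ _ _ (ha0 i w) (hale i w) (hq0 _ _)
    have h2 : ∑ i, (- a i w * Real.log (s w) - a i w * Real.log (q (φ w) i)
        + (s w * q (φ w) i - a i w)) = Real.negMulLog (s w) - ∑ i, a i w * Real.log (q (φ w) i)
        + (s w * ∑ i, q (φ w) i - s w) := by
      rw [Finset.sum_add_distrib, Finset.sum_sub_distrib, Finset.sum_sub_distrib, ← Finset.mul_sum,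
        hsum, ← Finset.sum_mul, Finset.sum_neg_distrib, hsum]
      rfl
    have h3 : s w * ∑ i, q (φ w) i ≤ s w := by
      have := mul_le_mul_of_nonneg_left (hqs (φ w)) (measureReal_nonneg : 0 ≤ s w)
      linarith
    have h4 : ∑ i, a i w * Real.log (q (φ w) i) = a (φ w) w * Real.log (1 - ε)
        + (s w - a (φ w) w) * (Real.log ε - Real.log N) := by
      rw [← hsum w, ← Finset.add_sum_erase _ _ (Finset.mem_univ (φ w)),
        ← Finset.add_sum_erase _ (fun i => a i w) (Finset.mem_univ (φ w)), add_sub_cancel_left,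
        Finset.sum_mul]
      congr 1
      · simp [hq]
      · refine Finset.sum_congr rfl fun i hi => ?_
        rw [← Real.log_div hε.ne' (by positivity)]
        simp [hq, (Finset.mem_erase.1 hi).1]
    have h5 : Real.log (1 - ε) ≤ 0 := Real.log_nonpos (by linarith) (by linarith)
    have h6 := hale (φ w) w
    have h7 : Real.log (1 - ε) * (s w - a (φ w) w) ≤ 0 :=
      mul_nonpos_of_nonpos_of_nonneg h5 (by linarith)
    linarith
  rw [hE]
  refine (Finset.sum_le_sum fun w _ => hstep w).trans ?_
  rw [Finset.sum_add_distrib, Finset.sum_sub_distrib, ← Finset.mul_sum, hs1, ← Finset.sum_mul,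
    Finset.sum_sub_distrib, hgood, hs1, _root_.sub_sub_cancel, mul_one]
  have hl : 0 ≤ Real.log N - Real.log ε := by
    have := Real.log_nonneg hN1
    have := Real.log_nonpos hε.le hε1.le
    linarith
  have := mul_le_mul_of_nonneg_right h hl
  have hEW : Ent μ W = ∑ w, Real.negMulLog (s w) := rfl
  rw [hEW]
  linarith

lemma Ent_nonneg (μ : Measure α) [IsProbabilityMeasure μ] {ι : Type*} [Fintype ι] (X : α → ι) :
    0 ≤ Ent μ X :=
  Finset.sum_nonneg fun _ _ => Real.negMulLog_nonneg measureReal_nonneg measureReal_le_one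

/-- Itinerary of length `k`. -/
def itn (T : α → α) {ι : Type*} (R : α → ι) (k : ℕ) : α → (Fin k → ι) :=
  fun x i => R (T^[(i : ℕ)] x)

lemma measurable_itn (T : α → α) (hT : Measurable T) {ι : Type*} [MeasurableSpace ι] (R : α → ι)
    (hR : Measurable R) (k : ℕ) : Measurable (itn T R k) :=
  measurable_pi_lambda _ fun i => hR.comp (hT.iterate i)

lemma Ent_step (μ : Measure α) [IsProbabilityMeasure μ] (T : α → α) (hT : Measurable T)
    (hinv : μ.map T = μ) {ι : Type*} [Fintype ι]
    [MeasurableSpace ι] [MeasurableSingletonClass ι] (R : α → ι) (hR : Measurable R) (k : ℕ)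
    (φ : (Fin k → ι) → ι)
    (ε δ : ℝ) (hε : 0 < ε) (hε1 : ε < 1)
    (h : μ.real {x | R x ≠ φ (itn T R k (T x))} ≤ δ) :
    Ent μ (itn T R (k + 1)) ≤ Ent μ (itn T R k) - Real.log (1 - ε)
      + δ * (Real.log (Fintype.card ι + 1) - Real.log ε) := by
  have hm := measurable_itn T hT R hR k
  have h1 := Ent_pair_le μ R hR (fun x => itn T R k (T x)) (hm.comp hT) φ ε δ hε hε1 h
  have h2 : Ent μ (fun x => itn T R k (T x)) = Ent μ (itn T R k) := by
    unfold Ent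
    refine Finset.sum_congr rfl fun i _ => ?_
    congr 1
    conv_rhs => rw [← hinv]
    rw [map_measureReal_apply hT (hm (measurableSet_singleton i))]
    rfl
  have h3 : itn T R (k + 1) = (fun p : ι × (Fin k → ι) => (Fin.cons p.1 p.2 : Fin (k+1) → ι)) ∘
      (fun x => (R x, itn T R k (T x))) := by
    funext x i
    refine Fin.cases ?_ (fun j => ?_) i
    · simp [itn]
    · simp [itn]
  rw [h2] at h1
  rw [h3]
  exact (Ent_comp_le μ _ (hR.prodMk (hm.comp hT)) _).trans h1

lemma Ent_small (μ : Measure α) [IsProbabilityMeasure μ] (T : α → α) (hT : Measurable T)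
    (hinv : μ.map T = μ) {ι : Type*} [Fintype ι]
    [MeasurableSpace ι] [MeasurableSingletonClass ι] (R : α → ι) (hR : Measurable R)
    (h : ∀ δ : ℝ, 0 < δ → ∃ r : ℕ, ∀ k, r ≤ k → ∃ φ : (Fin k → ι) → ι,
      μ.real {x | R x ≠ φ (itn T R k (T x))} ≤ δ) (η : ℝ) (hη : 0 < η) :
    ∃ k : ℕ, Ent μ (itn T R (k + 1)) ≤ η * (k + 1) := by
  obtain ⟨ε, hε, hε1, hεη⟩ : ∃ ε : ℝ, 0 < ε ∧ ε < 1 ∧ - Real.log (1 - ε) ≤ η / 4 := by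
    refine ⟨1 - Real.exp (-(η/4)), ?_, ?_, ?_⟩
    · have := Real.exp_lt_one_iff.2 (show -(η/4) < 0 by linarith); linarith
    · have := Real.exp_pos (-(η/4)); linarith
    · simp
  set L := Real.log (Fintype.card ι + 1) - Real.log ε with hL
  have hL0 : 0 < L := by
    have := Real.log_nonneg (show (1:ℝ) ≤ Fintype.card ι + 1 by
      linarith [(Nat.cast_nonneg (Fintype.card ι) : (0:ℝ) ≤ _)])
    have := Real.log_neg hε hε1
    linarith
  obtain ⟨r, hr⟩ := h (η / (4 * L)) (by positivity)
  have hstep : ∀ k, r ≤ k → Ent μ (itn T R (k + 1)) ≤ Ent μ (itn T R k) + η / 2 := by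
    intro k hk
    obtain ⟨φ, hφ⟩ := hr k hk
    have := Ent_step μ T hT hinv R hR k φ ε _ hε hε1 hφ
    rw [← hL] at this
    have e : η / (4 * L) * L = η / 4 := by field_simp
    rw [e] at this
    linarith
  have hind : ∀ j : ℕ, Ent μ (itn T R (r + j)) ≤ Ent μ (itn T R r) + j * (η / 2) := by
    intro j
    induction j with
    | zero => simp
    | succ j ih =>
      have := hstep (r + j) (by omega)
      rw [← add_assoc]; push_cast; linarith
  obtain ⟨j, hj⟩ := exists_nat_ge (Ent μ (itn T R r) / (η / 2))
  rw [div_le_iff₀ (by positivity)] at hj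
  refine ⟨r + j, ?_⟩
  have := hind (j + 1)
  rw [← add_assoc] at this
  push_cast at this ⊢
  have hr0 : (0:ℝ) ≤ r := Nat.cast_nonneg r
  nlinarith

end Ent

end RJ

namespace RJ

lemma exists_injOn (n : ℕ) (hn : 0 < n) (μ : Measure UnitAddCircle) [IsProbabilityMeasure μ]
    (h : Triv n μ) : ∃ X : Set UnitAddCircle, MeasurableSet X ∧ μ Xᶜ = 0 ∧ Set.InjOn (mT n) X := by
  set X0 : Set UnitAddCircle := {x | jac n μ x = 1} with hX0
  have hm0 : MeasurableSet X0 := measurableSet_eq_fun (measurable_jac _ _) measurable_const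
  have hc0 : μ X0ᶜ = 0 := h
  have hmeq : μ X0 = sig n μ X0 := by
    conv_lhs => rw [← withDensity_jac n hn μ]
    rw [withDensity_apply _ hm0, setLIntegral_congr_fun hm0 (g := fun _ => 1) (fun x hx => hx)]
    simp
  have hsig : sig n μ X0 = ∑ j ∈ Finset.range n, μ ((fun x => x + j • tr n) ⁻¹' X0) := by
    unfold sig
    rw [Measure.finsetSum_apply]
    exact Finset.sum_congr rfl fun j _ => Measure.map_apply (measurable_add_const _) hm0
  have hz : ∀ j ∈ Finset.range n, j ≠ 0 → μ ((fun x => x + j • tr n) ⁻¹' X0) = 0 := by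
    intro j hj hj0
    rw [hsig, ← Finset.add_sum_erase _ _ (Finset.mem_range.2 hn)] at hmeq
    simp only [zero_smul, add_zero, Set.preimage_id'] at hmeq
    have h2 : ∑ j ∈ (Finset.range n).erase 0, μ ((fun x => x + j • tr n) ⁻¹' X0) = 0 := by
      have := (ENNReal.add_right_inj (measure_ne_top μ X0)).1 ((add_zero _).trans hmeq)
      exact this.symm
    exact (Finset.sum_eq_zero_iff.1 h2) j (Finset.mem_erase.2 ⟨hj0, hj⟩)
  refine ⟨X0 \ ⋃ j ∈ (Finset.range n).erase 0, (fun x => x + j • tr n) ⁻¹' X0, ?_, ?_, ?_⟩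
  · exact hm0.diff (Finset.measurableSet_biUnion _ fun j _ => measurable_add_const _ hm0)
  · rw [Set.diff_eq, Set.compl_inter, compl_compl]
    refine measure_union_null hc0 ?_
    refine (measure_biUnion_null_iff (Finset.countable_toSet _)).2 ?_
    intro j hj
    have := Finset.mem_erase.1 hj
    exact hz j this.2 this.1
  · rintro x ⟨hx, hx'⟩ y ⟨hy, hy'⟩ hxy
    obtain ⟨j, hj, e⟩ := exists_eq_add_of_mT_eq n hn hxy
    by_cases hj0 : j = 0
    · simpa [hj0] using e
    · exfalso
      apply hy'
      simp only [Set.mem_iUnion]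
      exact ⟨j, Finset.mem_erase.2 ⟨hj0, Finset.mem_range.2 hj⟩, by simpa [← e] using hx⟩

/-- fractional part coordinate -/
noncomputable def fr (x : UnitAddCircle) : ℝ := (AddCircle.equivIco 1 0 x : ℝ)

lemma measurable_fr : Measurable fr :=
  measurable_subtype_coe.comp (AddCircle.measurableEquivIco 1 0).measurable

lemma fr_coe (x : UnitAddCircle) : ((fr x : ℝ) : UnitAddCircle) = x :=
  (AddCircle.equivIco 1 0).symm_apply_apply x

lemma fr_nonneg (x : UnitAddCircle) : 0 ≤ fr x := (AddCircle.equivIco 1 0 x).2.1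

lemma fr_lt (x : UnitAddCircle) : fr x < 1 := by
  have := (AddCircle.equivIco 1 0 x).2.2
  simpa [fr] using this

lemma fr_mT (n : ℕ) (x : UnitAddCircle) : fr (mT n x) = Int.fract (n * fr x) := by
  have : mT n x = ((n * fr x : ℝ) : UnitAddCircle) := by
    conv_lhs => rw [← fr_coe x]
    unfold mT
    rw [← AddCircle.coe_nsmul, nsmul_eq_mul]
  rw [this, fr, AddCircle.coe_equivIco_mk_apply]
  simp

/-- first digit in base n -/
noncomputable def digit (n : ℕ) (x : UnitAddCircle) : Fin (n + 1) := Fin.ofNat (n + 1) ⌊n * fr x⌋₊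

lemma measurable_digit (n : ℕ) : Measurable (digit n) := by
  unfold digit
  exact (measurable_from_top (f := fun k => Fin.ofNat (n+1) k)).comp
    (Nat.measurable_floor.comp (measurable_fr.const_mul _))

lemma digit_spec (n : ℕ) (x : UnitAddCircle) :
    (n : ℝ) * fr x = (digit n x : ℕ) + fr (mT n x) := by
  have h0 : 0 ≤ (n:ℝ) * fr x := mul_nonneg (Nat.cast_nonneg n) (fr_nonneg x)
  have h1 : (digit n x : ℕ) = ⌊n * fr x⌋₊ := by
    unfold digit
    rw [Fin.val_ofNat]
    apply Nat.mod_eq_of_lt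
    rw [Nat.lt_succ_iff]
    apply Nat.floor_le_of_le
    have := mul_le_mul_of_nonneg_left (fr_lt x).le (Nat.cast_nonneg n : (0:ℝ) ≤ n)
    linarith
  rw [h1, fr_mT, natCast_floor_eq_intCast_floor h0, Int.floor_add_fract]

lemma digits_close (n : ℕ) (hn : 2 ≤ n) (r : ℕ) : ∀ x y : UnitAddCircle,
    (∀ i < r, digit n ((mT n)^[i] x) = digit n ((mT n)^[i] y)) →
    |fr x - fr y| ≤ (1 / 2 : ℝ) ^ r := by
  induction r with
  | zero =>
    intro x y _
    have := fr_nonneg x; have := fr_nonneg y; have := fr_lt x; have := fr_lt y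
    rw [pow_zero, abs_le]; constructor <;> linarith
  | succ r ih =>
    intro x y h
    have h1 := ih (mT n x) (mT n y) fun i hi => by
      have := h (i + 1) (by omega)
      simpa [Function.iterate_succ_apply] using this
    have h2 : digit n x = digit n y := h 0 (by omega)
    have ex := digit_spec n x
    have ey := digit_spec n y
    rw [h2] at ex
    have e : (n:ℝ) * (fr x - fr y) = fr (mT n x) - fr (mT n y) := by linarith
    rw [← e, abs_mul, Nat.abs_cast] at h1
    have hn' : (2:ℝ) ≤ n := by exact_mod_cast hn
    have := mul_le_mul_of_nonneg_right hn' (abs_nonneg (fr x - fr y))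
    rw [pow_succ]
    linarith

lemma dist_le_fr (x y : UnitAddCircle) : dist x y ≤ |fr x - fr y| := by
  rw [dist_eq_norm]
  conv_lhs => rw [← fr_coe x, ← fr_coe y]
  rw [← AddCircle.coe_sub]
  exact QuotientAddGroup.norm_mk_le_norm

lemma exists_predict (n : ℕ) (hn : 2 ≤ n) (μ : Measure UnitAddCircle) [IsProbabilityMeasure μ]
    (hinv : μ.map (mT n) = μ) (h : Triv n μ) {ι : Type*} [Fintype ι] [MeasurableSpace ι]
    [MeasurableSingletonClass ι] (R : UnitAddCircle → ι) (hR : Measurable R)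
    (g : ι → Fin (n + 1)) (hg : ∀ x, g (R x) = digit n x) (δ : ℝ) (hδ : 0 < δ) :
    ∃ r : ℕ, ∀ k, r ≤ k → ∃ φ : (Fin k → ι) → ι,
      μ.real {x | R x ≠ φ (itn (mT n) R k (mT n x))} ≤ δ := by
  classical
  obtain ⟨X, hXm, hX0, hinj⟩ := exists_injOn n (by omega) μ h
  set E : ι → Set UnitAddCircle := fun a => mT n '' (X ∩ R ⁻¹' {a}) with hE
  have hEm : ∀ a, MeasurableSet (E a) := fun a =>
    (hXm.inter (hR (measurableSet_singleton a))).image_of_continuousOn_injOn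
      (continuous_nsmul n).continuousOn (hinj.mono Set.inter_subset_left)
  have hEd : ∀ a b, a ≠ b → Disjoint (E a) (E b) := by
    intro a b hab
    refine Set.disjoint_left.2 ?_
    rintro _ ⟨x, ⟨hx, hxa⟩, rfl⟩ ⟨y, ⟨hy, hyb⟩, e⟩
    have := hinj hy hx e
    subst this
    exact hab (hxa.symm.trans hyb)
  set δ' : ℝ≥0∞ := ENNReal.ofReal (δ / (Fintype.card ι + 1)) with hδ'
  have hδ'0 : δ' ≠ 0 := by
    rw [hδ', Ne, ENNReal.ofReal_eq_zero, not_le]; positivity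
  have hK : ∀ a, ∃ K ⊆ E a, IsCompact K ∧ μ (E a \ K) < δ' := fun a =>
    (hEm a).exists_isCompact_sdiff_lt (measure_ne_top _ _) hδ'0
  choose K hKE hKc hKμ using hK
  have hev : ∀ᶠ r : ℕ in Filter.atTop, ∀ a b, a ≠ b → ∀ x ∈ K a, ∀ y ∈ K b,
      (1 / 2 : ℝ) ^ r < dist x y := by
    rw [Filter.eventually_all]; intro a
    rw [Filter.eventually_all]; intro b
    by_cases hab : a = b
    · simp [hab]
    obtain ⟨ρ, hρ, hd⟩ := Metric.exists_pos_forall_lt_edist (hKc a) (hKc b).isClosed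
      ((hEd a b hab).mono (hKE a) (hKE b))
    have ht := tendsto_pow_atTop_nhds_zero_of_lt_one (r := (1/2 : ℝ)) (by norm_num) (by norm_num)
    filter_upwards [ht.eventually_lt_const (show (0:ℝ) < ρ from hρ)] with r hr _ x hx y hy
    refine hr.trans ?_
    have := hd x hx y hy
    rw [edist_nndist, ENNReal.coe_lt_coe] at this
    rw [← coe_nndist]
    exact_mod_cast this
  obtain ⟨r, hr⟩ := Filter.eventually_atTop.1 hev
  refine ⟨r, fun k hk => ?_⟩
  have hr := hr k hk
  have hne : Nonempty ι := ⟨R 0⟩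
  have huniq : ∀ a b, ∀ x ∈ K a, ∀ y ∈ K b, itn (mT n) R k x = itn (mT n) R k y → a = b := by
    intro a b x hx y hy e
    by_contra hab
    have h1 := hr a b hab x hx y hy
    have h2 := digits_close n hn k x y fun i hi => by
      have := congrFun e ⟨i, hi⟩
      simp only [itn] at this
      rw [← hg, ← hg, this]
    exact absurd (dist_le_fr x y) (not_le.2 (h2.trans_lt h1))
  set φ : (Fin k → ι) → ι := fun w => if hw : ∃ a, ∃ x ∈ K a, itn (mT n) R k x = w
    then hw.choose else Classical.arbitrary ι with hφ
  have hφK : ∀ a, ∀ y ∈ K a, φ (itn (mT n) R k y) = a := by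
    intro a y hy
    have hw : ∃ b, ∃ x ∈ K b, itn (mT n) R k x = itn (mT n) R k y := ⟨a, y, hy, rfl⟩
    simp only [hφ]
    rw [dif_pos hw]
    obtain ⟨x, hx, e⟩ := hw.choose_spec
    exact huniq _ _ x hx y hy e
  refine ⟨φ, ?_⟩
  have hsub : {x | R x ≠ φ (itn (mT n) R k (mT n x))} ⊆
      Xᶜ ∪ mT n ⁻¹' (⋃ a, (E a \ K a)) := by
    intro x hx
    by_contra hcon
    simp only [Set.mem_union, Set.mem_compl_iff, not_or, not_not, Set.mem_preimage,
      Set.mem_iUnion, not_exists, Set.mem_sdiff, not_and] at hcon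
    have hxE : mT n x ∈ E (R x) := ⟨x, ⟨hcon.1, rfl⟩, rfl⟩
    have := hcon.2 _ hxE
    exact hx (hφK _ _ this).symm
  have hmeasU : MeasurableSet (⋃ a, (E a \ K a)) :=
    MeasurableSet.iUnion fun a => (hEm a).diff (hKc a).measurableSet
  have hμ : μ {x | R x ≠ φ (itn (mT n) R k (mT n x))} ≤ ENNReal.ofReal δ := by
    refine (measure_mono hsub).trans ((measure_union_le _ _).trans ?_)
    rw [hX0, zero_add, ← Measure.map_apply (measurable_mT n) hmeasU, hinv]
    refine (measure_iUnion_fintype_le μ _).trans ?_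
    refine (Finset.sum_le_sum fun a _ => (hKμ a).le).trans ?_
    rw [Finset.sum_const, Finset.card_univ, nsmul_eq_mul, hδ', ← ENNReal.ofReal_natCast,
      ← ENNReal.ofReal_mul (Nat.cast_nonneg _)]
    apply ENNReal.ofReal_le_ofReal
    rw [← mul_div_assoc, div_le_iff₀ (by positivity)]
    nlinarith
  exact ENNReal.toReal_le_of_le_ofReal hδ.le hμ

lemma ks_zero (n : ℕ) (hn : 2 ≤ n) (μ : Measure UnitAddCircle) [IsProbabilityMeasure μ]
    (hinv : μ.map (mT n) = μ) (h : Triv n μ) : ksEntropy (mT n) μ = 0 := by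
  classical
  unfold ksEntropy
  simp only [iSup_eq_zero]
  intro l P hP
  obtain ⟨hPm, hPd, -⟩ := hP
  set X : UnitAddCircle → (Fin l → Bool) := fun x i => decide (x ∈ P i) with hX
  have hXm : Measurable X := by
    refine measurable_pi_lambda _ fun i => ?_
    refine measurable_to_bool ?_
    have : (fun x => X x i) ⁻¹' {true} = P i := by ext x; simp [hX]
    rw [this]; exact hPm i
  set R : UnitAddCircle → (Fin l → Bool) × Fin (n + 1) := fun x => (X x, digit n x) with hRdef
  have hR : Measurable R := hXm.prodMk (measurable_digit n)
  have hsm := Ent_small μ (mT n) (measurable_mT n) hinv R hR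
    (fun δ hδ => exists_predict n hn μ hinv h R hR Prod.snd (fun _ => rfl) δ hδ)
  have hle : ∀ k, ∑ f, Real.negMulLog ((μ (refinedPartition (mT n) P k f)).toReal)
      ≤ Ent μ (itn (mT n) R k) := by
    intro k
    have h1 : Ent μ (itn (mT n) X k) ≤ Ent μ (itn (mT n) R k) :=
      Ent_comp_le μ (itn (mT n) R k) (measurable_itn _ (measurable_mT n) R hR k)
        (fun w i => (w i).1)
    refine le_trans ?_ h1
    set J : (Fin k → Fin l) → (Fin k → Fin l → Bool) := fun f i j => decide (j = f i) with hJ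
    have hJinj : Function.Injective J := by
      intro f f' e
      funext i
      have := congrFun (congrFun e i) (f i)
      simpa [hJ] using this
    have hcell : ∀ f, refinedPartition (mT n) P k f = itn (mT n) X k ⁻¹' {J f} := by
      intro f
      ext x
      simp only [refinedPartition, Set.mem_iInter, Set.mem_preimage, Set.mem_singleton_iff]
      constructor
      · intro hx
        funext i j
        simp only [itn, hX, hJ, decide_eq_decide]
        constructor
        · intro hj
          by_contra hne
          exact Set.disjoint_left.1 (hPd hne) hj (hx i)
        · rintro rfl; exact hx i
      · intro e i
        have := congrFun (congrFun e i) (f i)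
        simpa [itn, hX, hJ] using this
    unfold Ent
    calc ∑ f, Real.negMulLog ((μ (refinedPartition (mT n) P k f)).toReal)
        = ∑ f, Real.negMulLog (μ.real (itn (mT n) X k ⁻¹' {J f})) := by
          refine Finset.sum_congr rfl fun f _ => ?_
          rw [hcell f]; rfl
      _ = ∑ w ∈ Finset.univ.image J, Real.negMulLog (μ.real (itn (mT n) X k ⁻¹' {w})) := by
          rw [Finset.sum_image hJinj.injOn]
      _ ≤ _ := Finset.sum_le_sum_of_subset_of_nonneg (Finset.subset_univ _)
          fun _ _ _ => Real.negMulLog_nonneg measureReal_nonneg measureReal_le_one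
  refine le_antisymm (ENNReal.le_of_forall_pos_le_add fun η hη _ => ?_) zero_le
  obtain ⟨k, hk⟩ := hsm η hη
  refine (iInf_le _ k).trans ?_
  rw [zero_add]
  apply ENNReal.div_le_of_le_mul
  unfold finPartitionEntropy
  refine (ENNReal.ofReal_le_ofReal ((hle (k + 1)).trans hk)).trans (le_of_eq ?_)
  rw [ENNReal.ofReal_mul NNReal.zero_le_coe]
  congr 1
  · simp
  · rw [ENNReal.ofReal_add (Nat.cast_nonneg _) zero_le_one]; simp

end RJ

open MeasureTheory

/-- Rudolph–Johnson: Let `n` and `m` be multiplicatively independent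
integers, each at least 2, and let `μ` be a Borel probability measure on `𝕋` invariant
and ergodic under the multiplicative semigroup generated by `×n` and `×m`.  If
`h_μ(×n) > 0` then `μ` is Lebesgue measure on `𝕋`. -/
theorem rudolph_johnson_times_n_times_m_positive_entropy
    (n m : ℕ) (hn : 2 ≤ n) (hm : 2 ≤ m)
    (hindep : Irrational (Real.log n / Real.log m))
    (μ : Measure UnitAddCircle) [IsProbabilityMeasure μ]
    (hinvn : Measure.map (fun x : UnitAddCircle => n • x) μ = μ)
    (hinvm : Measure.map (fun x : UnitAddCircle => m • x) μ = μ)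
    (herg : ∀ A : Set UnitAddCircle, MeasurableSet A →
      (fun x : UnitAddCircle => n • x) ⁻¹' A = A →
      (fun x : UnitAddCircle => m • x) ⁻¹' A = A → μ A = 0 ∨ μ A = 1)
    (hent : 0 < ksEntropy (fun x : UnitAddCircle => n • x) μ) :
    μ = volume := by
  have hnt : ¬ RJ.Triv n μ := fun h => hent.ne' (RJ.ks_zero n hn μ hinvn h)
  obtain ⟨K, G, a, b, hK, ha, hb, hne, hia, hib, c, hc0, hc1, hkap⟩ :=
    RJ.selection n m hn hm hindep μ hinvn hinvm hnt
  have hE := RJ.exists_equi μ K G a b hK ha hb hne hia hib c hc0 hc1 hkap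
  exact RJ.conclude n m hn hm μ hinvn hinvm herg (c / 2) (by positivity)
    (RJ.closed_ge μ (c / 2) (by positivity) (RJ.ge_of_equi μ (c / 2) hE))
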